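/- Let φ: T → ℝ/ℤ be a continuous map of nonzero positive degree. There is a number N = N(φ) such that for all n ≥ N there is a finite pairwise disjoint collection of balls {B_i} of radius 1/n in T such that for all i, H(φ^{−1}[0] ∩ B_i) ≥ C(T) n μ(B_i), and such that the Borel function ρ = n Σ_i χ_{5B_i} is an upper gradient of a Lipschitz map ψ: T → ℝ/ℤ of degree 1; here C(T) depends only on the data of T. -/

import Mathlib

open MeasureTheory Metric Set Filter Topology
open scoped ENNReal NNReal unitInterval

noncomputable section

namespace Duality

/-! ### Rectifiable curves, line integrals and upper gradients

A rectifiable path is encoded by its arclength-type parametrization: a `1`-Lipschitz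
map defined on a compact interval `[a, b]`.  The line integral `∫_γ ρ ds` of a
nonnegative Borel function is then the Lebesgue integral of `ρ ∘ γ` over `[a, b]`. -/

structure UPath (X : Type*) [PseudoMetricSpace X] where
  a : ℝ
  b : ℝ
  hab : a ≤ b
  toFun : ℝ → X
  lip : LipschitzOnWith 1 toFun (Set.Icc a b)

namespace UPath

variable {X : Type*} [PseudoMetricSpace X]

/-- starting point of the path -/
def start (γ : UPath X) : X := γ.toFun γ.a

/-- end point of the path -/
def finish (γ : UPath X) : X := γ.toFun γ.b

/-- The line integral `∫_γ ρ ds`. -/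
def integral (γ : UPath X) (ρ : X → ℝ≥0∞) : ℝ≥0∞ :=
  ∫⁻ t in Set.Icc γ.a γ.b, ρ (γ.toFun t)

/-- The image (trace) `|γ|` of the path. -/
def trace (γ : UPath X) : Set X := γ.toFun '' Set.Icc γ.a γ.b

/-- The length of the path. -/
def length (γ : UPath X) : ℝ≥0∞ := eVariationOn γ.toFun (Set.Icc γ.a γ.b)

/-- The path stays inside the set `W`. -/
def InSet (γ : UPath X) (W : Set X) : Prop := ∀ t ∈ Set.Icc γ.a γ.b, γ.toFun t ∈ W

/-- The reparametrization of a rectifiable path as a `Path` (continuous map from `[0,1]`). -/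
def toPath (γ : UPath X) : Path γ.start γ.finish where
  toFun := fun t => γ.toFun (γ.a + (t : ℝ) * (γ.b - γ.a))
  continuous_toFun := by
    have hmem : ∀ t : unitInterval, γ.a + (t : ℝ) * (γ.b - γ.a) ∈ Set.Icc γ.a γ.b := by
      intro t
      obtain ⟨ht0, ht1⟩ := t.2
      constructor
      · nlinarith [γ.hab]
      · nlinarith [γ.hab]
    exact γ.lip.continuousOn.comp_continuous (by continuity) hmem
  source' := by simp [start]
  target' := by simp [finish]

end UPath

/-- `ρ` is an upper gradient of `u`. -/
def IsUpperGradient {X : Type*} [PseudoMetricSpace X] {Y : Type*} [PseudoEMetricSpace Y]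
    (u : X → Y) (ρ : X → ℝ≥0∞) : Prop :=
  ∀ γ : UPath X, edist (u γ.start) (u γ.finish) ≤ γ.integral ρ

/-- The `p`-modulus of a family of (rectifiable) paths. -/
def pathMod {X : Type*} [PseudoMetricSpace X] [MeasurableSpace X]
    (μ : Measure X) (p : ℝ) (Γ : Set (UPath X)) : ℝ≥0∞ :=
  ⨅ (ρ : X → ℝ≥0∞) (_ : Measurable ρ ∧ ∀ γ ∈ Γ, 1 ≤ γ.integral ρ),
    ∫⁻ x, ρ x ^ p ∂μ

/-- `ρ` is a `p`-weak upper gradient of `u`: the upper gradient inequality may fail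
only on a path family of zero `p`-modulus. -/
def IsWeakUpperGradient {X : Type*} [PseudoMetricSpace X] [MeasurableSpace X]
    {Y : Type*} [PseudoEMetricSpace Y] (μ : Measure X) (p : ℝ)
    (u : X → Y) (ρ : X → ℝ≥0∞) : Prop :=
  pathMod μ p {γ : UPath X | ¬ edist (u γ.start) (u γ.finish) ≤ γ.integral ρ} = 0

/-- `ρ` is a `p`-weak upper gradient of `u` in the subset `U`. -/
def IsWeakUpperGradientOn {X : Type*} [PseudoMetricSpace X] [MeasurableSpace X]
    {Y : Type*} [PseudoEMetricSpace Y] (μ : Measure X) (p : ℝ) (U : Set X)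
    (u : X → Y) (ρ : X → ℝ≥0∞) : Prop :=
  pathMod (μ.restrict U) p
    {γ : UPath X | γ.InSet U ∧ ¬ edist (u γ.start) (u γ.finish) ≤ γ.integral ρ} = 0

/-- `ρ` is the minimal `p`-weak upper gradient of `u`: it is a `p`-integrable `p`-weak
upper gradient which is `μ`-a.e. dominated by every other one. -/
def IsMinimalWeakUpperGradient {X : Type*} [PseudoMetricSpace X] [MeasurableSpace X]
    {Y : Type*} [PseudoEMetricSpace Y] (μ : Measure X) (p : ℝ)
    (u : X → Y) (ρ : X → ℝ≥0∞) : Prop :=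
  Measurable ρ ∧ IsWeakUpperGradient μ p u ρ ∧ (∫⁻ x, ρ x ^ p ∂μ) < ⊤ ∧
    ∀ ρ' : X → ℝ≥0∞, Measurable ρ' → IsWeakUpperGradient μ p u ρ' →
      (∫⁻ x, ρ' x ^ p ∂μ) < ⊤ → ∀ᵐ x ∂μ, ρ x ≤ ρ' x

/-! ### Doubling measures, Poincaré inequalities, Ahlfors regularity -/

/-- `μ` is a doubling (Borel) measure with doubling constant `Cμ`:
`0 < μ(2B) ≤ Cμ · μ(B) < ∞` for every ball `B` of radius `r < diam T`. -/
def IsDoubling {X : Type*} [MetricSpace X] [MeasurableSpace X]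
    (μ : Measure X) (Cμ : ℝ≥0∞) : Prop :=
  ∀ (x : X) (r : ℝ), 0 < r → r < Metric.diam (Set.univ : Set X) →
    0 < μ (ball x (2 * r)) ∧ μ (ball x (2 * r)) ≤ Cμ * μ (ball x r) ∧
      Cμ * μ (ball x r) < ⊤

/-- `(X, d, μ)` supports a weak `1`-Poincaré inequality with constants `CP`, `lP`:
`⨍_B |u - u_B| dμ ≤ CP · diam B · ⨍_{lP·B} ρ dμ` for every locally integrable `u`
and every upper gradient `ρ` of `u`, and balls have positive finite measure. -/
def SupportsPoincare {X : Type*} [MetricSpace X] [MeasurableSpace X]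
    (μ : Measure X) (CP lP : ℝ) : Prop :=
  (∀ (x : X) (r : ℝ), 0 < r → 0 < μ (ball x r) ∧ μ (ball x r) < ⊤) ∧
  ∀ (u : X → ℝ) (ρ : X → ℝ≥0∞), LocallyIntegrable u μ → Measurable ρ →
    IsUpperGradient u ρ → ∀ (x : X) (r : ℝ), 0 < r →
      (∫⁻ y in ball x r, ENNReal.ofReal |u y - ⨍ z in ball x r, u z ∂μ| ∂μ) /
          μ (ball x r) ≤
        ENNReal.ofReal (CP * Metric.diam (ball x r)) *
          ((∫⁻ y in ball x (lP * r), ρ y ∂μ) / μ (ball x (lP * r)))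

/-- `μ` is Ahlfors `q`-regular with constants `0 < aA ≤ AA`. -/
def IsAhlforsRegular {X : Type*} [MetricSpace X] [MeasurableSpace X]
    (μ : Measure X) (q aA AA : ℝ) : Prop :=
  0 < aA ∧ aA ≤ AA ∧
    ∀ (x : X) (r : ℝ), 0 < r → r < Metric.diam (Set.univ : Set X) →
      ENNReal.ofReal (aA * r ^ q) ≤ μ (ball x r) ∧
        μ (ball x r) ≤ ENNReal.ofReal (AA * r ^ q)

/-! ### The circle `ℝ/ℤ`, loops and degree -/

lemma intCast_coe_eq_zero (k : ℤ) : ((k : ℝ) : UnitAddCircle) = 0 :=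
  (AddCircle.coe_eq_zero_iff _).mpr ⟨k, by simp⟩

/-- The standard loop of degree `k` in `ℝ/ℤ` based at `y`: `t ↦ y + [k t]`. -/
def stdLoop (k : ℤ) (y : UnitAddCircle) : Path y y where
  toFun := fun t => y + (((k : ℝ) * (t : ℝ) : ℝ) : UnitAddCircle)
  continuous_toFun := by
    refine continuous_const.add ?_
    exact (AddCircle.continuous_mk' 1).comp (by continuity)
  source' := by simp
  target' := by
    have h1 : ((1 : unitInterval) : ℝ) = 1 := rfl
    have h : (((k : ℝ) * ((1 : unitInterval) : ℝ) : ℝ) : UnitAddCircle) = 0 := by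
      rw [h1, mul_one]; exact intCast_coe_eq_zero k
    simp [h]

/-- Concatenation of `n` copies of a loop. -/
def loopPow {X : Type*} [TopologicalSpace X] {x : X} (γ : Path x x) : ℕ → Path x x
  | 0 => Path.refl x
  | n + 1 => (loopPow γ n).trans γ

/-- A loop `γ` based at `x` has degree 1 (relative to the chosen generator `α₀` based
at `x₀`) if it is loop-homotopic to a conjugate `η * α₀ * η⁻¹` of `α₀`. -/
def IsDegreeOneLoop {T : Type*} [TopologicalSpace T] (x₀ : T) (α₀ : Path x₀ x₀)
    {x : T} (γ : Path x x) : Prop :=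
  ∃ η : Path x x₀, Path.Homotopic γ (η.trans (α₀.trans η.symm))

/-- A map `f : T → ℝ/ℤ` has degree `k`: it pushes every degree-1 loop based at `x`
to a loop which is loop-homotopic to `[f x] + k·β`, `β (t) = [t]`. -/
def HasDegree {T : Type*} [TopologicalSpace T] (x₀ : T) (α₀ : Path x₀ x₀)
    (f : T → UnitAddCircle) (k : ℤ) : Prop :=
  ∃ hf : Continuous f, ∀ (x : T) (γ : Path x x), IsDegreeOneLoop x₀ α₀ γ →
    Path.Homotopic (γ.map hf) (stdLoop k (f x))

/-- The class of `α₀` generates `π₁(T, x₀) ≅ ℤ`. -/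
def IsGenerator {T : Type*} [TopologicalSpace T] (x₀ : T) (α₀ : Path x₀ x₀) : Prop :=
  Function.Bijective fun k : ℤ =>
    (FundamentalGroup.fromPath (X := TopCat.of T) ⟦α₀⟧ : FundamentalGroup (TopCat.of T) x₀) ^ k

/-- `T` is semilocally simply connected. -/
def SemilocallySimplyConnected (T : Type*) [TopologicalSpace T] : Prop :=
  ∀ x : T, ∃ U ∈ 𝓝 x, ∀ γ : Path x x, (∀ t, γ t ∈ U) → Path.Homotopic γ (Path.refl x)

/-- `f` is a Lipschitz map of degree 1. -/
def DegOneLip {T : Type*} [MetricSpace T] (x₀ : T) (α₀ : Path x₀ x₀)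
    (f : T → UnitAddCircle) : Prop :=
  (∃ L : ℝ≥0, LipschitzWith L f) ∧ HasDegree x₀ α₀ f 1

/-! ### Capacity and surface modulus -/

/-- The degree 1 `p`-capacity of `T`, defined through minimal `p`-weak upper gradients:
the infimum of `∫ ρ^p dμ` over `p`-weak upper gradients `ρ` of Lipschitz degree-1 maps. -/
def cap {T : Type*} [MetricSpace T] [MeasurableSpace T] (μ : Measure T) (p : ℝ)
    (x₀ : T) (α₀ : Path x₀ x₀) : ℝ≥0∞ :=
  ⨅ (f : T → UnitAddCircle) (_ : DegOneLip x₀ α₀ f) (ρ : T → ℝ≥0∞)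
    (_ : Measurable ρ ∧ IsWeakUpperGradient μ p f ρ),
      ∫⁻ x, ρ x ^ p ∂μ

/-- The pointwise Lipschitz constant `Lip f (x)`. -/
def pLip {T : Type*} [MetricSpace T] (f : T → UnitAddCircle) (x : T) : ℝ≥0∞ :=
  Filter.limsup
    (fun r : ℝ => ⨆ y ∈ ball x r, edist (f x) (f y) / ENNReal.ofReal r) (𝓝[>] (0 : ℝ))

/-- The degree 1 `p`-capacity of `T`, defined through pointwise Lipschitz constants. -/
def capLip {T : Type*} [MetricSpace T] [MeasurableSpace T] (μ : Measure T) (p : ℝ)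
    (x₀ : T) (α₀ : Path x₀ x₀) : ℝ≥0∞ :=
  ⨅ (f : T → UnitAddCircle) (_ : DegOneLip x₀ α₀ f), ∫⁻ x, pLip f x ^ p ∂μ

/-- The codimension 1 spherical Hausdorff measure, as a set function:
`H(A) = sup_{δ>0} inf { ∑ μ(B_i)/r_i }`, the infimum being over countable covers of `A`
by balls `B_i` of radii `r_i ≤ δ`. -/
def codimH {T : Type*} [MetricSpace T] [MeasurableSpace T] (μ : Measure T)
    (A : Set T) : ℝ≥0∞ :=
  ⨆ (δ : ℝ) (_ : 0 < δ),
    ⨅ (c : ℕ → T) (r : ℕ → ℝ) (_ : ∀ i, r i ≤ δ)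
      (_ : A ⊆ ⋃ i, ball (c i) (r i)),
        ∑' i, μ (ball (c i) (r i)) / ENNReal.ofReal (r i)

/-- The integral `∫_S g dH` of `g ≥ 0` over `S` against the codimension 1 Hausdorff
measure, via the layer-cake (Choquet) formula. -/
def choquetIntegral {T : Type*} [MetricSpace T] [MeasurableSpace T] (μ : Measure T)
    (S : Set T) (g : T → ℝ≥0∞) : ℝ≥0∞ :=
  ∫⁻ t in Set.Ioi (0 : ℝ), codimH μ {x | x ∈ S ∧ ENNReal.ofReal t < g x}

/-- The family `Γ*` of all level sets `φ⁻¹[0]` of finite codimension 1 Hausdorff measure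
of continuous degree-1 maps `φ : T → ℝ/ℤ`. -/
def Surfaces {T : Type*} [MetricSpace T] [MeasurableSpace T] (μ : Measure T)
    (x₀ : T) (α₀ : Path x₀ x₀) : Set (Set T) :=
  {S | ∃ φ : T → UnitAddCircle, HasDegree x₀ α₀ φ 1 ∧ S = φ ⁻¹' {0} ∧ codimH μ S < ⊤}

/-- The surface `q`-modulus of a family of surfaces, the surfaces being equipped with the
codimension 1 Hausdorff measure. -/
def surfModOf {T : Type*} [MetricSpace T] [MeasurableSpace T] (μ : Measure T) (q : ℝ)
    (𝒮 : Set (Set T)) : ℝ≥0∞ :=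
  ⨅ (ρ : T → ℝ≥0∞) (_ : Measurable ρ ∧ ∀ S ∈ 𝒮, 1 ≤ choquetIntegral μ S ρ),
    ∫⁻ x, ρ x ^ q ∂μ

/-- The surface modulus `mod_q T`. -/
def surfMod {T : Type*} [MetricSpace T] [MeasurableSpace T] (μ : Measure T) (q : ℝ)
    (x₀ : T) (α₀ : Path x₀ x₀) : ℝ≥0∞ :=
  surfModOf μ q (Surfaces μ x₀ α₀)

/-- The family `Γ*` with the `(q-1)`-dimensional Hausdorff measure instead. -/
def SurfacesH {T : Type*} [MetricSpace T] [MeasurableSpace T] [BorelSpace T] (q : ℝ)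
    (x₀ : T) (α₀ : Path x₀ x₀) : Set (Set T) :=
  {S | ∃ φ : T → UnitAddCircle, HasDegree x₀ α₀ φ 1 ∧ S = φ ⁻¹' {0} ∧ μH[q - 1] S < ⊤}

/-- The surface modulus `mod_q T` defined through the `(q-1)`-dimensional Hausdorff
measures `H^{q-1} ⌞ S`, `S ∈ Γ*`. -/
def surfModH {T : Type*} [MetricSpace T] [MeasurableSpace T] [BorelSpace T]
    (μ : Measure T) (q pstar : ℝ) (x₀ : T) (α₀ : Path x₀ x₀) : ℝ≥0∞ :=
  ⨅ (ρ : T → ℝ≥0∞)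
    (_ : Measurable ρ ∧ ∀ S ∈ SurfacesH (T := T) q x₀ α₀, 1 ≤ ∫⁻ x in S, ρ x ∂μH[q - 1]),
      ∫⁻ x, ρ x ^ pstar ∂μ

/-- The standing assumptions 2.1. -/
def Standing {T : Type*} [MetricSpace T] [MeasurableSpace T] (μ : Measure T)
    (Cμ : ℝ≥0∞) (CP lP : ℝ) (x₀ : T) (α₀ : Path x₀ x₀) : Prop :=
  IsDoubling μ Cμ ∧ SupportsPoincare μ CP lP ∧ SemilocallySimplyConnected T ∧
    IsGenerator x₀ α₀ ∧ ∃ f : T → UnitAddCircle, DegOneLip x₀ α₀ f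

/-! ### The universal cover -/

/-- `π` is a local isometry. -/
def IsLocalIsometry {X Y : Type*} [MetricSpace X] [MetricSpace Y] (π : X → Y) : Prop :=
  ∀ x : X, ∃ ε : ℝ, 0 < ε ∧
    ∀ y ∈ ball x ε, ∀ z ∈ ball x ε, dist (π y) (π z) = dist y z

/-- `(T̃, π)` is the universal cover of `T`, with `T̃` carrying the length metric pulled
back by `π` (so that `π` is a local isometry). -/
def CoverSetup {T Tt : Type*} [MetricSpace T] [MetricSpace Tt] (π : Tt → T) : Prop :=
  IsCoveringMap π ∧ Function.Surjective π ∧ IsLocalIsometry π ∧ SimplyConnectedSpace Tt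

/-- `τ` is the deck transformation of the cover `π` determined by
`τ (γ̃ 0) = γ̃ 1` for every lift `γ̃` of every degree-1 loop `γ`. -/
def IsDeck {T Tt : Type*} [MetricSpace T] [MetricSpace Tt] (π : Tt → T)
    (x₀ : T) (α₀ : Path x₀ x₀) (τ : Tt → Tt) : Prop :=
  Continuous τ ∧ (∀ x, π (τ x) = π x) ∧
    ∀ (x : T) (γ : Path x x), IsDegreeOneLoop x₀ α₀ γ →
      ∀ γt : C(unitInterval, Tt), (∀ t, π (γt t) = γ t) → τ (γt 0) = γt 1

/-- `μ̃` is the natural lift of `μ` to the cover: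
`μ̃ (A) = ∫ #(π⁻¹(x) ∩ A) dμ (x)`. -/
def IsLiftedMeasure {T Tt : Type*} [MetricSpace T] [MeasurableSpace T]
    [MetricSpace Tt] [MeasurableSpace Tt] (π : Tt → T) (μ : Measure T)
    (μt : Measure Tt) : Prop :=
  ∀ A : Set Tt, MeasurableSet A → μt A = ∫⁻ x, ((π ⁻¹' {x} ∩ A).encard : ℝ≥0∞) ∂μ

/-! ### Newtonian spaces -/

/-- The seminorm of `N^{1,p}(U)`. -/
def NSeminorm {X : Type*} [PseudoMetricSpace X] [MeasurableSpace X] (μ : Measure X)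
    (p : ℝ) (U : Set X) (f : X → ℝ) : ℝ≥0∞ :=
  (∫⁻ x in U, ENNReal.ofReal |f x| ^ p ∂μ) ^ (1 / p) +
    ⨅ (ρ : X → ℝ≥0∞) (_ : Measurable ρ ∧ IsWeakUpperGradientOn μ p U f ρ),
      (∫⁻ x in U, ρ x ^ p ∂μ) ^ (1 / p)

/-- `f ∈ N^{1,p}_loc`. -/
def MemNloc {X : Type*} [PseudoMetricSpace X] [MeasurableSpace X] (μ : Measure X)
    (p : ℝ) (f : X → ℝ) : Prop :=
  ∀ U : Set X, IsOpen U → IsCompact (closure U) →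
    (∫⁻ x in U, ENNReal.ofReal |f x| ^ p ∂μ) < ⊤ ∧
      ∃ ρ : X → ℝ≥0∞, Measurable ρ ∧ IsWeakUpperGradientOn μ p U f ρ ∧
        (∫⁻ x in U, ρ x ^ p ∂μ) < ⊤

/-- The collection `F`: nonnegative Borel functions `ρ` on `T` such that `ρ ∘ π` is a
`p`-weak upper gradient of some `f ∈ N^{1,p}_loc (T̃)` with `f ∘ τ - f = 1` a.e. -/
def MemF {T Tt : Type*} [MetricSpace T] [MeasurableSpace T] [MetricSpace Tt]
    [MeasurableSpace Tt] (π : Tt → T) (τ : Tt → Tt) (μt : Measure Tt) (p : ℝ)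
    (ρ : T → ℝ≥0∞) : Prop :=
  Measurable ρ ∧ ∃ f : Tt → ℝ, MemNloc μt p f ∧ (∀ᵐ x ∂μt, f (τ x) - f x = 1) ∧
    IsWeakUpperGradient μt p f (ρ ∘ π)

/-- The capacity `cap_p^F T`. -/
def capF {T Tt : Type*} [MetricSpace T] [MeasurableSpace T] [MetricSpace Tt]
    [MeasurableSpace Tt] (μ : Measure T) (π : Tt → T) (τ : Tt → Tt) (μt : Measure Tt)
    (p : ℝ) : ℝ≥0∞ :=
  ⨅ (ρ : T → ℝ≥0∞) (_ : MemF π τ μt p ρ), ∫⁻ x, ρ x ^ p ∂μ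

/-! ### Miscellaneous operators -/

/-- The restricted Hardy–Littlewood maximal operator `M_R`. -/
def restrMax {T : Type*} [MetricSpace T] [MeasurableSpace T] (μ : Measure T)
    (R : ℝ≥0∞) (g : T → ℝ≥0∞) (x : T) : ℝ≥0∞ :=
  ⨆ (s : ℝ) (_ : 0 < s ∧ ENNReal.ofReal s ≤ R),
    (∫⁻ y in ball x s, g y ∂μ) / μ (ball x s)

/-- The upper Lebesgue integral. -/
def upperLintegral {Y : Type*} [MeasurableSpace Y] (ν : Measure Y)
    (F : Y → ℝ≥0∞) : ℝ≥0∞ :=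
  ⨅ (G : Y → ℝ≥0∞) (_ : Measurable G ∧ ∀ y, F y ≤ G y), ∫⁻ y, G y ∂ν

/-! ### The sets `Ω` and the functions `ψ̃`, `ζ`, `ψ` of Section 4.3 -/

/-- The set of points reachable from `A` by a rectifiable path inside `W`. -/
def reach {T : Type*} [MetricSpace T] (A W : Set T) : Set T :=
  {x | ∃ γ : UPath T, γ.start ∈ A ∧ γ.finish = x ∧ γ.InSet W}

/-- `inf_γ ∫_γ ρ ds` over rectifiable paths connecting `A` to `x` inside `W`. -/
def pathDist {T : Type*} [MetricSpace T] (ρ : T → ℝ≥0∞) (A W : Set T) (x : T) : ℝ≥0∞ :=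
  ⨅ (γ : UPath T) (_ : γ.start ∈ A ∧ γ.finish = x ∧ γ.InSet W), γ.integral ρ

open scoped Classical in
/-- The function `ψ̃`. -/
def psiTilde {T : Type*} [MetricSpace T] (ρ : T → ℝ≥0∞) (A W : Set T) (x : T) : ℝ :=
  if x ∈ reach A W then (pathDist ρ A W x).toReal else 0

/-- The function `min {1, ψ̃}`. -/
def zeta {T : Type*} [MetricSpace T] (ρ : T → ℝ≥0∞) (A W : Set T) (x : T) : ℝ :=
  min 1 (psiTilde ρ A W x)

/-- The competing admissible map `ψ = [min {1, ψ̃}] : T → ℝ/ℤ`. -/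
def psiMap {T : Type*} [MetricSpace T] (ρ : T → ℝ≥0∞) (A W : Set T) (x : T) :
    UnitAddCircle :=
  ((zeta ρ A W x : ℝ) : UnitAddCircle)

end Duality

namespace Duality

/-- Doubling on all scales together with a Poincaré inequality in unnormalized form. -/
structure PIData {T : Type*} [MetricSpace T] [MeasurableSpace T] (μ : Measure T)
    (D A : ℝ≥0) (p : ℕ) : Prop where
  pos : ∀ (x : T) (r : ℝ), 0 < r → 0 < μ (ball x r)
  fin : ∀ (x : T) (r : ℝ), μ (ball x r) < ⊤
  one_le : 1 ≤ D
  dbl : ∀ (x : T) (r : ℝ), μ (ball x (2 * r)) ≤ D * μ (ball x r)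
  poincare : ∀ (u : T → ℝ) (ρ : T → ℝ≥0∞), LocallyIntegrable u μ → Measurable ρ →
    IsUpperGradient u ρ → ∀ (x : T) (r : ℝ), 0 < r →
      ∫⁻ y in ball x r, ENNReal.ofReal |u y - ⨍ z in ball x r, u z ∂μ| ∂μ ≤
        A * ENNReal.ofReal r * ∫⁻ y in ball x (2 ^ p * r), ρ y ∂μ

lemma measure_ball_two_pow_mul_le {T : Type*} [MetricSpace T] [MeasurableSpace T] {μ : Measure T}
    {D : ℝ≥0} (h : ∀ (x : T) (r : ℝ), μ (ball x (2 * r)) ≤ D * μ (ball x r))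
    (x : T) (r : ℝ) (j : ℕ) :
    μ (ball x (2 ^ j * r)) ≤ (D : ℝ≥0∞) ^ j * μ (ball x r) := by
  induction j with
  | zero => simp
  | succ j ih =>
    calc μ (ball x (2 ^ (j + 1) * r)) = μ (ball x (2 * (2 ^ j * r))) := by
          rw [pow_succ']; ring_nf
      _ ≤ D * μ (ball x (2 ^ j * r)) := h _ _
      _ ≤ D * ((D : ℝ≥0∞) ^ j * μ (ball x r)) := by gcongr
      _ = (D : ℝ≥0∞) ^ (j + 1) * μ (ball x r) := by rw [pow_succ', mul_assoc]

lemma IsDoubling.all_scales {T : Type*} [MetricSpace T] [CompactSpace T] [Nontrivial T]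
    [MeasurableSpace T] {μ : Measure T} {Cμ : ℝ≥0∞} (h : IsDoubling μ Cμ) (x : T) (r : ℝ) :
    μ (ball x (2 * r)) ≤ Cμ * μ (ball x r) := by
  have hb : Bornology.IsBounded (univ : Set T) := isCompact_univ.isBounded
  have hd : 0 < diam (univ : Set T) :=
    Metric.diam_pos Set.nontrivial_univ hb
  rcases le_or_gt r 0 with hr | hr
  · rw [ball_eq_empty.2 (by linarith)]; simp
  rcases lt_or_ge r (diam (univ : Set T)) with hr' | hr'
  · exact (h x r hr hr').2.1
  · calc μ (ball x (2 * r)) ≤ μ (ball x (2 * (3 / 4 * diam (univ : Set T)))) := by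
          apply measure_mono
          intro y _
          rw [mem_ball]
          have := dist_le_diam_of_mem hb (mem_univ y) (mem_univ x)
          linarith
      _ ≤ Cμ * μ (ball x (3 / 4 * diam (univ : Set T))) :=
          (h x _ (by linarith) (by linarith)).2.1
      _ ≤ Cμ * μ (ball x r) := by gcongr; linarith

lemma exists_PIData (Cμ : ℝ≥0∞) (CP lP : ℝ) :
    ∃ (D A : ℝ≥0) (p : ℕ), 1 ≤ D ∧
      ∀ (T : Type) [MetricSpace T] [MeasurableSpace T] [CompactSpace T] [Nontrivial T]
        (μ : Measure T), IsDoubling μ Cμ → SupportsPoincare μ CP lP → PIData μ D A p := by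
  obtain ⟨p, hp⟩ : ∃ p : ℕ, lP ≤ 2 ^ p := by
    obtain ⟨p, hp⟩ := pow_unbounded_of_one_lt lP (one_lt_two)
    exact ⟨p, hp.le⟩
  obtain ⟨j, hj⟩ : ∃ j : ℕ, 0 < lP → 1 ≤ 2 ^ j * lP := by
    obtain ⟨j, hj⟩ := pow_unbounded_of_one_lt (1 / lP) (one_lt_two)
    refine ⟨j, fun h => ?_⟩
    rw [div_lt_iff₀ h] at hj
    exact hj.le
  set D : ℝ≥0 := max Cμ.toNNReal 1 with hD
  refine ⟨D, 2 * CP.toNNReal * D ^ j, p, le_max_right _ _, ?_⟩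
  intro T _ _ _ _ μ hdbl hP
  have hb : Bornology.IsBounded (univ : Set T) := isCompact_univ.isBounded
  have hd : 0 < diam (univ : Set T) :=
    Metric.diam_pos Set.nontrivial_univ hb
  have hfin : ∀ (x : T) (r : ℝ), μ (ball x r) < ⊤ := by
    intro x r
    rcases le_or_gt r 0 with hr | hr
    · rw [ball_eq_empty.2 hr]; simp
    · exact (hP.1 x r hr).2
  have hC : Cμ ≠ ⊤ := by
    obtain ⟨x, -, -⟩ := exists_pair_ne T
    intro h
    have h1 := (hdbl x (diam (univ : Set T) / 2) (by linarith) (by linarith)).2.2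
    rw [h, ENNReal.top_mul (hP.1 x _ (by linarith)).1.ne'] at h1
    exact lt_irrefl _ h1
  have hCD : Cμ ≤ D := by
    rw [← ENNReal.coe_toNNReal hC]
    exact_mod_cast le_max_left _ _
  have hdb : ∀ (x : T) (r : ℝ), μ (ball x (2 * r)) ≤ D * μ (ball x r) := fun x r =>
    (hdbl.all_scales x r).trans (by gcongr)
  have hpow := measure_ball_two_pow_mul_le hdb
  refine ⟨fun x r hr => (hP.1 x r hr).1, hfin, le_max_right _ _, hdb, ?_⟩
  intro u ρ hu hρ hug x r hr
  have h := hP.2 u ρ hu hρ hug x r hr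
  have hB0 := (hP.1 x r hr).1.ne'
  have hBt := (hP.1 x r hr).2.ne
  rw [ENNReal.div_le_iff hB0 hBt] at h
  refine h.trans ?_
  rcases le_or_gt lP 0 with hl | hl
  · rw [ball_eq_empty.2 (mul_nonpos_of_nonpos_of_nonneg hl hr.le)]
    simp
  have hlr : 0 < lP * r := by positivity
  have hM0 := (hP.1 x _ hlr).1.ne'
  have hMt := (hP.1 x _ hlr).2.ne
  have h1 : μ (ball x r) ≤ (D : ℝ≥0∞) ^ j * μ (ball x (lP * r)) := by
    refine le_trans (measure_mono (ball_subset_ball ?_)) (hpow x (lP * r) j)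
    nlinarith [hj hl]
  have h2 : ENNReal.ofReal (CP * diam (ball x r)) ≤ 2 * CP.toNNReal * ENNReal.ofReal r := by
    calc ENNReal.ofReal (CP * diam (ball x r))
        ≤ ENNReal.ofReal (CP.toNNReal * (2 * r)) := by
          apply ENNReal.ofReal_le_ofReal
          have : diam (ball x r) ≤ 2 * r := diam_ball hr.le
          exact mul_le_mul (Real.le_coe_toNNReal CP) this diam_nonneg (by positivity)
      _ = 2 * CP.toNNReal * ENNReal.ofReal r := by
          rw [ENNReal.ofReal_mul (by positivity), ENNReal.ofReal_mul (by positivity)]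
          simp only [Real.coe_toNNReal', ENNReal.ofReal_ofNat, ENNReal.ofReal_max,
            ENNReal.ofReal_zero]
          rw [max_eq_left zero_le, show ENNReal.ofReal CP = (CP.toNNReal : ℝ≥0∞) from rfl]
          ring
  have h3 : ball x (lP * r) ⊆ ball x (2 ^ p * r) := ball_subset_ball (by gcongr)
  calc ENNReal.ofReal (CP * diam (ball x r)) *
        ((∫⁻ y in ball x (lP * r), ρ y ∂μ) / μ (ball x (lP * r))) * μ (ball x r)
      ≤ (2 * CP.toNNReal * ENNReal.ofReal r) *
        ((∫⁻ y in ball x (2 ^ p * r), ρ y ∂μ) / μ (ball x (lP * r))) *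
          ((D : ℝ≥0∞) ^ j * μ (ball x (lP * r))) := by
        gcongr
    _ = (2 * CP.toNNReal * ENNReal.ofReal r) * (D : ℝ≥0∞) ^ j *
        ((∫⁻ y in ball x (2 ^ p * r), ρ y ∂μ) / μ (ball x (lP * r)) * μ (ball x (lP * r))) := by
        ring
    _ = _ := by
        rw [ENNReal.div_mul_cancel hM0 hMt]
        push_cast
        ring

lemma edist_le_lintegral_of_local {Y : Type*} [PseudoEMetricSpace Y] {c : ℝ → Y} {h : ℝ → ℝ≥0∞}
    {a b : ℝ} (hab : a ≤ b)
    (hloc : ∀ t ∈ Icc a b, ∃ ε > 0, ∀ s ∈ Icc a b, ∀ s' ∈ Icc a b, |s - t| < ε → |s' - t| < ε →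
      s ≤ s' → edist (c s) (c s') ≤ ∫⁻ r in Icc s s', h r) :
    edist (c a) (c b) ≤ ∫⁻ r in Icc a b, h r := by
  choose! ε hε hloc using hloc
  obtain ⟨t, ht0, htm, ⟨m, hm⟩, hts⟩ := exists_monotone_Icc_subset_open_cover_Icc hab
    (c := fun i : Icc a b => ball i (ε i)) (fun i => isOpen_ball)
    (fun i _ => mem_iUnion.2 ⟨i, mem_ball_self (hε i i.2)⟩)
  have key : ∀ n, edist (c a) (c (t n)) ≤ ∫⁻ r in Icc a (t n : ℝ), h r := by
    intro n
    induction n with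
    | zero => rw [ht0]; simp
    | succ n ih =>
      have hmono : (t n : ℝ) ≤ t (n + 1) := htm (Nat.le_succ n)
      have hstep : edist (c (t n)) (c (t (n + 1))) ≤ ∫⁻ r in Icc (t n : ℝ) (t (n + 1)), h r := by
        obtain ⟨i, hi⟩ := hts n
        have h1 : t n ∈ ball i (ε i) := hi (left_mem_Icc.2 hmono)
        have h2 : t (n + 1) ∈ ball i (ε i) := hi (right_mem_Icc.2 hmono)
        exact hloc i i.2 _ (t n).2 _ (t (n + 1)).2 h1 h2 hmono
      have hsplit : ∫⁻ r in Icc a (t (n + 1) : ℝ), h r =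
          (∫⁻ r in Icc a (t n : ℝ), h r) + ∫⁻ r in Icc (t n : ℝ) (t (n + 1)), h r := by
        rw [setLIntegral_congr (Ioc_ae_eq_Icc (a := (t n : ℝ)) (b := t (n + 1))).symm,
          ← lintegral_union measurableSet_Ioc, Icc_union_Ioc_eq_Icc (t n).2.1 hmono]
        rw [Set.disjoint_left]
        intro r hr hr'
        exact absurd hr.2 (not_le.2 hr'.1)
      calc edist (c a) (c (t (n + 1))) ≤ edist (c a) (c (t n)) + edist (c (t n)) (c (t (n + 1))) :=
            edist_triangle _ _ _
        _ ≤ _ := by rw [hsplit]; gcongr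
  have := key m
  rwa [hm m le_rfl] at this

/-- A map which is locally `L`-Lipschitz on an open set `W` and locally constant near every point
outside `W` has `L · χ_W` as an upper gradient. -/
lemma isUpperGradient_of_local {X : Type*} [PseudoMetricSpace X] {Y : Type*} [PseudoEMetricSpace Y]
    {u : X → Y} {W : Set X} {L : ℝ≥0∞}
    (h : ∀ x, ∃ V ∈ 𝓝 x, (V ⊆ W ∧ ∀ y ∈ V, ∀ z ∈ V, edist (u y) (u z) ≤ L * edist y z) ∨
      ∀ y ∈ V, ∀ z ∈ V, u y = u z) :
    IsUpperGradient u (fun x => L * W.indicator (fun _ => 1) x) := by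
  intro γ
  refine edist_le_lintegral_of_local (c := fun t => u (γ.toFun t)) γ.hab ?_
  intro t ht
  obtain ⟨V, hV, hV'⟩ := h (γ.toFun t)
  have hc : ContinuousWithinAt γ.toFun (Icc γ.a γ.b) t := γ.lip.continuousOn t ht
  obtain ⟨ε, hε, hsub⟩ := Metric.mem_nhdsWithin_iff.1 (hc hV)
  refine ⟨ε, hε, ?_⟩
  intro s hs s' hs' hst hst' hss
  have hmem : ∀ r ∈ Icc s s', γ.toFun r ∈ V := by
    intro r hr
    apply hsub
    refine ⟨?_, hs.1.trans hr.1, hr.2.trans hs'.2⟩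
    rw [mem_ball, Real.dist_eq, abs_lt]
    rw [abs_lt] at hst hst'
    constructor <;> linarith [hr.1, hr.2, hst.1, hst'.2]
  rcases hV' with ⟨hVW, hL⟩ | hconst
  · have h1 : ∫⁻ r in Icc s s', L * W.indicator (fun _ => 1) (γ.toFun r) =
        ∫⁻ _ in Icc s s', L := by
      refine setLIntegral_congr_fun measurableSet_Icc ?_
      intro r hr
      simp [indicator_of_mem (hVW (hmem r hr))]
    calc edist (u (γ.toFun s)) (u (γ.toFun s'))
        ≤ L * edist (γ.toFun s) (γ.toFun s') :=
          hL _ (hmem s (left_mem_Icc.2 hss)) _ (hmem s' (right_mem_Icc.2 hss))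
      _ ≤ L * edist s s' := by
          gcongr
          simpa using γ.lip hs hs'
      _ = _ := by
          rw [h1, setLIntegral_const, Real.volume_Icc, edist_dist, dist_comm, Real.dist_eq,
            abs_of_nonneg (by linarith)]
  · rw [hconst _ (hmem s (left_mem_Icc.2 hss)) _ (hmem s' (right_mem_Icc.2 hss)), edist_self]
    exact zero_le

lemma isUpperGradient_one_of_local {X : Type*} [PseudoMetricSpace X] {Y : Type*}
    [PseudoEMetricSpace Y] {u : X → Y} {ε : ℝ} (hε : 0 < ε)
    (h : ∀ y z, dist y z < ε → edist (u y) (u z) ≤ edist y z) :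
    IsUpperGradient u (fun _ => 1) := by
  have := isUpperGradient_of_local (u := u) (W := univ) (L := 1) (fun x =>
    ⟨ball x (ε / 2), ball_mem_nhds _ (by linarith), Or.inl ⟨subset_univ _, fun y hy z hz => by
      rw [one_mul]
      refine h y z ?_
      have := dist_triangle_right y z x
      rw [mem_ball] at hy hz
      linarith⟩⟩)
  simpa using this

/-- The restriction of a path to a subinterval. -/
def UPath.sub {X : Type*} [PseudoMetricSpace X] (γ : UPath X) (s t : ℝ) (hst : s ≤ t)
    (hs : γ.a ≤ s) (ht : t ≤ γ.b) : UPath X where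
  a := s
  b := t
  hab := hst
  toFun := γ.toFun
  lip := γ.lip.mono (Icc_subset_Icc hs ht)

lemma UPath.integral_sub_le {X : Type*} [PseudoMetricSpace X] (γ : UPath X) (s t : ℝ) (hst : s ≤ t)
    (hs : γ.a ≤ s) (ht : t ≤ γ.b) (ρ : X → ℝ≥0∞) :
    (γ.sub s t hst hs ht).integral ρ ≤ γ.integral ρ :=
  lintegral_mono_set (Icc_subset_Icc hs ht)

/-- A cutoff function of a ball: it equals `1` on `ball c r` and vanishes outside
`ball c (2 * r)`; it is identically zero when `r ≤ 0`. -/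
def cutoff {X : Type*} [PseudoMetricSpace X] (c : X) (r : ℝ) (x : X) : ℝ :=
  if 0 < r then max 0 (min 1 (3 - 2 * dist x c / r)) else 0

section cutoff

variable {X : Type*} [PseudoMetricSpace X] (c : X) (r : ℝ)

lemma cutoff_nonneg (x : X) : 0 ≤ cutoff c r x := by
  unfold cutoff; split_ifs <;> simp

lemma cutoff_le_one (x : X) : cutoff c r x ≤ 1 := by
  unfold cutoff; split_ifs <;> simp

lemma continuous_cutoff : Continuous (cutoff c r) := by
  unfold cutoff
  split_ifs
  · fun_prop
  · fun_prop

lemma cutoff_eq_one {x : X} (hx : x ∈ ball c r) : cutoff c r x = 1 := by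
  have hr : 0 < r := pos_of_mem_ball hx
  rw [mem_ball] at hx
  have : 2 * dist x c / r ≤ 2 := by rw [div_le_iff₀ hr]; linarith
  rw [cutoff, if_pos hr, min_eq_left (by linarith), max_eq_right zero_le_one]

lemma cutoff_eq_zero {x : X} (hx : 3 / 2 * r ≤ dist x c) : cutoff c r x = 0 := by
  unfold cutoff
  split_ifs with hr
  · have : 3 ≤ 2 * dist x c / r := by rw [le_div_iff₀ hr]; linarith
    rw [max_eq_left]
    exact (min_le_right _ _).trans (by linarith)
  · rfl

lemma edist_cutoff_le (x y : X) (hr : 0 < r) :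
    edist (cutoff c r x) (cutoff c r y) ≤ (2 / ENNReal.ofReal r) * edist x y := by
  have h2 : (2 / ENNReal.ofReal r) = ENNReal.ofReal (2 / r) := by
    rw [ENNReal.ofReal_div_of_pos hr]; simp
  rw [h2, edist_dist, edist_dist, ← ENNReal.ofReal_mul (by positivity)]
  apply ENNReal.ofReal_le_ofReal
  simp only [cutoff, if_pos hr, Real.dist_eq]
  have h0 : ∀ p q : ℝ, |max 0 p - max 0 q| ≤ |p - q| := fun p q => by
    simpa using abs_max_sub_max_le_max 0 p 0 q
  refine (h0 _ _).trans ?_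
  have h3 : |min 1 (3 - 2 * dist x c / r) - min 1 (3 - 2 * dist y c / r)| ≤
      |(3 - 2 * dist x c / r) - (3 - 2 * dist y c / r)| := by
    have := abs_min_sub_min_le_max 1 (3 - 2 * dist x c / r) 1 (3 - 2 * dist y c / r)
    simpa using this
  refine h3.trans ?_
  have h4 : (3 - 2 * dist x c / r) - (3 - 2 * dist y c / r) = 2 / r * (dist y c - dist x c) := by
    ring
  rw [h4, abs_mul, abs_of_pos (by positivity : 0 < 2 / r)]
  gcongr
  rw [dist_comm x y]
  exact abs_dist_sub_le _ _ _

lemma isUpperGradient_cutoff :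
    IsUpperGradient (cutoff c r)
      (fun x => (2 / ENNReal.ofReal r) * (ball c (2 * r)).indicator (fun _ => 1) x) := by
  apply isUpperGradient_of_local
  intro x
  rcases lt_or_ge 0 r with hr | hr
  · rcases lt_or_ge (dist x c) (2 * r) with hx | hx
    · exact ⟨ball c (2 * r), isOpen_ball.mem_nhds hx, Or.inl ⟨subset_rfl, fun y _ z _ =>
        edist_cutoff_le c r y z hr⟩⟩
    · refine ⟨{y | 3 / 2 * r < dist y c}, ?_, Or.inr fun y hy z hz => ?_⟩
      · exact (isOpen_lt continuous_const (by fun_prop)).mem_nhds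
          (show 3 / 2 * r < dist x c by linarith)
      · rw [cutoff_eq_zero c r (le_of_lt hy), cutoff_eq_zero c r (le_of_lt hz)]
  · exact ⟨univ, univ_mem, Or.inr fun y _ z _ => by
      simp [cutoff, not_lt.2 hr]⟩

end cutoff

section Quasiconvex

variable {T : Type*} [MetricSpace T] [CompactSpace T] [MeasurableSpace T] [BorelSpace T]
  {μ : Measure T} {D A : ℝ≥0} {p : ℕ}

omit [BorelSpace T] in
lemma PIData.isFiniteMeasure (h : PIData μ D A p) : IsFiniteMeasure μ := by
  rcases isEmpty_or_nonempty T with hT | ⟨⟨x⟩⟩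
  · exact ⟨by rw [univ_eq_empty_iff.2 hT]; simp⟩
  · obtain ⟨r, hr⟩ := (isCompact_univ (X := T)).isBounded.subset_ball x
    exact ⟨(measure_mono hr).trans_lt (h.fin x r)⟩

lemma PIData.lipschitz_improve (h : PIData μ D A p) {u : T → ℝ} (hu : Continuous u)
    (hug : IsUpperGradient u (fun _ => 1)) {L : ℝ} (hL : 0 ≤ L)
    (hlip : ∀ x y, |u x - u y| ≤ L * dist x y) (x y : T) :
    |u x - u y| ≤ (L / 4 + (4 * A * D ^ (p + 5) + 1)) * dist x y := by
  have := h.isFiniteMeasure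
  rcases eq_or_ne x y with rfl | hxy
  · simp
  set R := dist x y with hR
  have hRpos : 0 < R := dist_pos.2 hxy
  have hloc : LocallyIntegrable u μ := hu.locallyIntegrable
  set c := ⨍ z in ball x (2 * R), u z ∂μ with hc
  have hP := h.poincare u _ hloc measurable_const hug x (2 * R) (by positivity)
  have key : ∀ w : T, dist w x ≤ R →
      |u w - c| ≤ L * (R / 8) + (2 * A * D ^ (p + 5) * R + R / 8) := by
    intro w hw
    have hsub : ball w (R / 8) ⊆ ball x (2 * R) := ball_subset_ball' (by linarith)
    have hsub' : ball x (2 * R) ⊆ ball w (2 ^ 5 * (R / 8)) :=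
      ball_subset_ball' (by rw [dist_comm]; linarith)
    have hpos := h.pos w (R / 8) (by positivity)
    have hfin := h.fin w (R / 8)
    set M : ℝ := 2 * A * D ^ (p + 5) * R with hM
    have hM0 : 0 ≤ M := by positivity
    obtain ⟨z, hz, hz'⟩ : ∃ z ∈ ball w (R / 8), |u z - c| < M + R / 8 := by
      by_contra! hcon
      have h1 : ENNReal.ofReal (M + R / 8) * μ (ball w (R / 8)) ≤
          ENNReal.ofReal M * μ (ball w (R / 8)) := by
        calc ENNReal.ofReal (M + R / 8) * μ (ball w (R / 8))
            = ∫⁻ _ in ball w (R / 8), ENNReal.ofReal (M + R / 8) ∂μ := by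
              rw [setLIntegral_const]
          _ ≤ ∫⁻ z in ball w (R / 8), ENNReal.ofReal |u z - c| ∂μ :=
              setLIntegral_mono' measurableSet_ball
                (fun z hz => ENNReal.ofReal_le_ofReal (hcon z hz))
          _ ≤ ∫⁻ z in ball x (2 * R), ENNReal.ofReal |u z - c| ∂μ := lintegral_mono_set hsub
          _ ≤ A * ENNReal.ofReal (2 * R) * ∫⁻ y in ball x (2 ^ p * (2 * R)), 1 ∂μ := hP
          _ = A * ENNReal.ofReal (2 * R) * μ (ball x (2 ^ p * (2 * R))) := by simp
          _ ≤ A * ENNReal.ofReal (2 * R) * ((D : ℝ≥0∞) ^ p * μ (ball x (2 * R))) := by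
              gcongr; exact measure_ball_two_pow_mul_le h.dbl _ _ _
          _ ≤ A * ENNReal.ofReal (2 * R) *
              ((D : ℝ≥0∞) ^ p * ((D : ℝ≥0∞) ^ 5 * μ (ball w (R / 8)))) := by
              gcongr
              exact (measure_mono hsub').trans (measure_ball_two_pow_mul_le h.dbl _ _ _)
          _ = ENNReal.ofReal M * μ (ball w (R / 8)) := by
              have : ENNReal.ofReal M = A * ENNReal.ofReal (2 * R) * (D : ℝ≥0∞) ^ (p + 5) := by
                rw [hM, show (2 * A * D ^ (p + 5) * R : ℝ) = A * (2 * R) * (D ^ (p + 5) : ℝ≥0) by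
                  push_cast; ring, ENNReal.ofReal_mul (by positivity),
                  ENNReal.ofReal_mul (by positivity), ENNReal.ofReal_coe_nnreal,
                  ENNReal.ofReal_coe_nnreal]
                push_cast; rfl
              rw [this]; ring
      rw [ENNReal.mul_le_mul_iff_left hpos.ne' hfin.ne, ENNReal.ofReal_le_ofReal_iff hM0] at h1
      linarith
    calc |u w - c| ≤ |u w - u z| + |u z - c| := abs_sub_le _ _ _
      _ ≤ L * (R / 8) + (M + R / 8) := by
        refine add_le_add ((hlip w z).trans ?_) hz'.le
        gcongr
        rw [mem_ball, dist_comm] at hz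
        exact hz.le
  have hx := key x (by simpa using hRpos.le)
  have hy := key y (by rw [dist_comm])
  calc |u x - u y| ≤ |u x - c| + |c - u y| := abs_sub_le _ _ _
    _ ≤ _ := by rw [abs_sub_comm c]; nlinarith

lemma PIData.lipschitz_of_local (h : PIData μ D A p) {u : T → ℝ} {ε M : ℝ} (hε : 0 < ε)
    (hloc : ∀ y z, dist y z < ε → |u y - u z| ≤ dist y z) (h0 : ∀ x, 0 ≤ u x)
    (hM : ∀ x, u x ≤ M) (x y : T) :
    |u x - u y| ≤ 2 * (4 * A * D ^ (p + 5) + 1) * dist x y := by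
  have hM0 : 0 ≤ M := (h0 x).trans (hM x)
  set K : ℝ := 4 * A * D ^ (p + 5) + 1 with hK
  have hK0 : 0 ≤ K := by positivity
  have hug : IsUpperGradient u (fun _ => 1) := isUpperGradient_one_of_local hε fun y z hyz => by
    rw [edist_dist, edist_dist, Real.dist_eq]
    exact ENNReal.ofReal_le_ofReal (hloc y z hyz)
  have hu : Continuous u := by
    rw [Metric.continuous_iff]
    intro b η hη
    refine ⟨min ε η, lt_min hε hη, fun a ha => ?_⟩
    rw [Real.dist_eq]
    exact (hloc a b (ha.trans_le (min_le_left _ _))).trans_lt (ha.trans_le (min_le_right _ _))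
  have hstart : ∀ x y, |u x - u y| ≤ (1 + M / ε) * dist x y := by
    intro x y
    rcases lt_or_ge (dist x y) ε with hd | hd
    · refine (hloc x y hd).trans ?_
      have : 0 ≤ M / ε * dist x y := by positivity
      linarith
    · have h1 : |u x - u y| ≤ M := by
        rw [abs_le]
        constructor <;> linarith [h0 x, h0 y, hM x, hM y]
      have h2 : M ≤ M / ε * dist x y := by
        rw [div_mul_eq_mul_div, le_div_iff₀ hε]
        gcongr
      linarith [dist_nonneg (x := x) (y := y)]
  have hiter : ∀ n : ℕ, ∀ x y, |u x - u y| ≤ ((1 + M / ε) / 4 ^ n + 2 * K) * dist x y := by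
    intro n
    induction n with
    | zero =>
      intro x y
      refine (hstart x y).trans ?_
      refine mul_le_mul_of_nonneg_right ?_ dist_nonneg
      rw [pow_zero, div_one]
      linarith
    | succ n ih =>
      intro x y
      refine (h.lipschitz_improve hu hug (by positivity) ih x y).trans ?_
      refine mul_le_mul_of_nonneg_right ?_ dist_nonneg
      rw [pow_succ 4 n, ← hK]
      have : (1 + M / ε) / (4 ^ n * 4) = (1 + M / ε) / 4 ^ n / 4 := by rw [div_div]
      rw [this]
      linarith
  have hlim : Tendsto (fun n : ℕ => ((1 + M / ε) / 4 ^ n + 2 * K) * dist x y) atTop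
      (𝓝 ((0 + 2 * K) * dist x y)) := by
    refine Tendsto.mul_const _ (Tendsto.add_const _ ?_)
    exact tendsto_const_nhds.div_atTop (tendsto_pow_atTop_atTop_of_one_lt (by norm_num))
  rw [zero_add] at hlim
  exact ge_of_tendsto' hlim fun n => hiter n x y

/-- `f` is a coarse path of length `L` from `x` to `y`, with jumps of size at most `ε`. -/
def IsCoarsePath (ε : ℝ) (x y : T) (L : ℝ) (f : ℝ → T) : Prop :=
  f 0 = x ∧ (∀ t, L ≤ t → f t = y) ∧ ∀ t t', 0 ≤ t → t ≤ t' → dist (f t) (f t') ≤ t' - t + ε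

omit [CompactSpace T] [MeasurableSpace T] [BorelSpace T] in
lemma IsCoarsePath.extend {ε L : ℝ} {x y z : T} {f : ℝ → T} (hL : 0 ≤ L)
    (h : IsCoarsePath ε x y L f) (hyz : dist y z ≤ ε) :
    ∃ g, IsCoarsePath ε x z (L + dist y z) g := by
  classical
  obtain ⟨h0, h1, h2⟩ := h
  have hε : 0 ≤ ε := dist_nonneg.trans hyz
  rcases eq_or_ne y z with rfl | hne
  · exact ⟨f, h0, fun t ht => h1 t (by simpa using ht), h2⟩
  have hd : 0 < dist y z := dist_pos.2 hne
  refine ⟨fun t => if t < L + dist y z then f t else z, ?_, ?_, ?_⟩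
  · simp only
    rw [if_pos (by linarith), h0]
  · intro t ht
    exact if_neg (not_lt.2 ht)
  · intro t t' ht htt'
    simp only
    by_cases hc' : t' < L + dist y z
    · rw [if_pos (htt'.trans_lt hc'), if_pos hc']
      exact h2 t t' ht htt'
    rw [if_neg hc']
    by_cases hc : t < L + dist y z
    · rw [if_pos hc]
      rcases le_or_gt L t with hLt | hLt
      · rw [h1 t hLt]
        linarith
      · have h3 := h2 t L ht hLt.le
        rw [h1 L le_rfl] at h3
        have := dist_triangle (f t) y z
        linarith
    · rw [if_neg hc, dist_self]
      linarith

lemma PIData.exists_isCoarsePath (h : PIData μ D A p) {ε : ℝ} (hε : 0 < ε) {x y : T}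
    (hxy : x ≠ y) :
    ∃ f, IsCoarsePath ε x y ((2 * (4 * A * D ^ (p + 5) + 1) + 1) * dist x y) f := by
  set K : ℝ := 2 * (4 * A * D ^ (p + 5) + 1) with hK
  have hK0 : 0 ≤ K := by positivity
  have hd : 0 < dist x y := dist_pos.2 hxy
  set M : ℝ := (K + 1) * dist x y with hM
  have hM0 : 0 ≤ M := by positivity
  set S : T → Set ℝ := fun z => {L | L = M ∨ (0 ≤ L ∧ ∃ f, IsCoarsePath ε x z L f)} with hS
  have hSne : ∀ z, (S z).Nonempty := fun z => ⟨M, Or.inl rfl⟩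
  have hSbdd : ∀ z, BddBelow (S z) := fun z => ⟨0, by
    rintro L (rfl | ⟨hL, -⟩)
    · exact hM0
    · exact hL⟩
  set u : T → ℝ := fun z => sInf (S z) with hu
  have h0 : ∀ z, 0 ≤ u z := fun z => le_csInf (hSne z) (by
    rintro L (rfl | ⟨hL, -⟩)
    · exact hM0
    · exact hL)
  have hle : ∀ z, u z ≤ M := fun z => csInf_le (hSbdd z) (Or.inl rfl)
  have hstep : ∀ y z, dist y z < ε → u z ≤ u y + dist y z := by
    intro y z hyz
    rw [← sub_le_iff_le_add]
    refine le_csInf (hSne y) ?_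
    rintro L (rfl | ⟨hL, f, hf⟩)
    · rw [sub_le_iff_le_add]
      exact (hle z).trans (by linarith [dist_nonneg (x := y) (y := z)])
    · rw [sub_le_iff_le_add]
      obtain ⟨g, hg⟩ := hf.extend hL hyz.le
      exact csInf_le (hSbdd z) (Or.inr ⟨by positivity, g, hg⟩)
  have hloc : ∀ y z, dist y z < ε → |u y - u z| ≤ dist y z := by
    intro y z hyz
    have h1 := hstep y z hyz
    have h2 := hstep z y (by rwa [dist_comm])
    rw [dist_comm z y] at h2
    rw [abs_le]
    constructor <;> linarith
  have hux : u x = 0 := by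
    refine le_antisymm (csInf_le (hSbdd x) (Or.inr ⟨le_rfl, fun _ => x, rfl, fun _ _ => rfl, ?_⟩))
      (h0 x)
    intro t t' _ htt'
    rw [dist_self]
    linarith
  have huy : u y < M := by
    have h1 := h.lipschitz_of_local hε hloc h0 hle y x
    rw [hux, sub_zero, abs_of_nonneg (h0 y), dist_comm] at h1
    calc u y ≤ K * dist x y := h1
      _ < M := by rw [hM]; nlinarith
  obtain ⟨L, hLS, hLM⟩ := exists_lt_of_csInf_lt (hSne y) huy
  rcases hLS with rfl | ⟨hL0, f, hf0, hf1, hf2⟩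
  · exact absurd hLM (lt_irrefl _)
  · exact ⟨f, hf0, fun t ht => hf1 t (hLM.le.trans ht), hf2⟩

/-- Quasiconvexity: any two points are joined by a Lipschitz curve of comparable length. -/
lemma PIData.exists_lipschitz_curve (h : PIData μ D A p) {x y : T} (hxy : x ≠ y) :
    ∃ f : ℝ → T, f 0 = x ∧ f ((2 * (4 * A * D ^ (p + 5) + 1) + 1) * dist x y) = y ∧
      LipschitzOnWith 1 f (Ici 0) := by
  set L : ℝ := (2 * (4 * A * D ^ (p + 5) + 1) + 1) * dist x y with hL
  have hcoarse : ∀ n : ℕ, ∃ f, IsCoarsePath (1 / ((n : ℝ) + 1)) x y L f := fun n =>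
    h.exists_isCoarsePath (by positivity) hxy
  choose F hF using hcoarse
  have hlim : ∀ t : ℝ, ∃ z : T, Tendsto (fun n => F n t) (hyperfilter ℕ : Filter ℕ) (𝓝 z) := by
    intro t
    obtain ⟨z, -, hz⟩ := isCompact_univ.ultrafilter_le_nhds ((hyperfilter ℕ).map (fun n => F n t))
      (by simp)
    exact ⟨z, hz⟩
  choose f hf using hlim
  refine ⟨f, ?_, ?_, ?_⟩
  · refine tendsto_nhds_unique (hf 0) ?_
    simp only [fun n => (hF n).1]
    exact tendsto_const_nhds
  · refine tendsto_nhds_unique (hf L) ?_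
    simp only [fun n => (hF n).2.1 L le_rfl]
    exact tendsto_const_nhds
  · have key : ∀ t t', 0 ≤ t → t ≤ t' → dist (f t) (f t') ≤ t' - t := by
      intro t t' ht htt'
      have h1 := (hf t).dist (hf t')
      have h2 : Tendsto (fun n : ℕ => t' - t + 1 / ((n : ℝ) + 1)) (hyperfilter ℕ : Filter ℕ)
          (𝓝 (t' - t + 0)) :=
        (tendsto_const_nhds.add tendsto_one_div_add_atTop_nhds_zero_nat).mono_left
          Nat.hyperfilter_le_atTop
      rw [add_zero] at h2
      exact le_of_tendsto_of_tendsto' h1 h2 fun n => (hF n).2.2 t t' ht htt'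
    refine LipschitzOnWith.of_dist_le_mul ?_
    intro t ht t' ht'
    rw [NNReal.coe_one, one_mul, Real.dist_eq]
    rcases le_total t t' with hle | hle
    · rw [abs_sub_comm, abs_of_nonneg (by linarith)]
      exact key t t' ht hle
    · rw [dist_comm, abs_of_nonneg (by linarith)]
      exact key t' t ht' hle

lemma PIData.joinedIn (h : PIData μ D A p) {x y : T} {r : ℝ}
    (hr : (2 * (4 * A * D ^ (p + 5) + 1) + 1) * dist x y < r) :
    JoinedIn (ball x r) x y := by
  have hr0 : 0 < r := lt_of_le_of_lt (by positivity) hr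
  rcases eq_or_ne x y with rfl | hxy
  · exact JoinedIn.refl (mem_ball_self hr0)
  obtain ⟨f, hf0, hf1, hf⟩ := h.exists_lipschitz_curve hxy
  set L : ℝ := (2 * (4 * A * D ^ (p + 5) + 1) + 1) * dist x y with hL
  have hL0 : 0 ≤ L := by positivity
  have hmem : ∀ t : unitInterval, (t : ℝ) * L ∈ Ici (0 : ℝ) := fun t => mul_nonneg t.2.1 hL0
  refine ⟨⟨⟨fun t => f (t * L), hf.continuousOn.comp_continuous (by fun_prop) hmem⟩,
    by simp [hf0], by simp [hf1]⟩, fun t => ?_⟩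
  have h1 := hf.dist_le_mul (t * L) (hmem t) 0 (mem_Ici.2 le_rfl)
  rw [hf0] at h1
  have h2 : (t : ℝ) * L ≤ L := mul_le_of_le_one_left hL0 t.2.2
  rw [NNReal.coe_one, one_mul, Real.dist_eq, sub_zero, abs_of_nonneg (hmem t)] at h1
  exact lt_of_le_of_lt (h1.trans h2) hr

lemma PIData.pathConnectedSpace [Nonempty T] (h : PIData μ D A p) : PathConnectedSpace T where
  nonempty := inferInstance
  joined _ _ := (h.joinedIn (lt_add_one _)).joined

lemma PIData.locallyPathConnectedSpace (h : PIData μ D A p) : LocallyPathConnectedSpace T := by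
  rw [locallyPathConnectedSpace_iff_pathComponentIn_mem_nhds]
  intro x u hu hxu
  obtain ⟨r, hr, hsub⟩ := Metric.isOpen_iff.1 hu x hxu
  set K : ℝ := 2 * (4 * A * D ^ (p + 5) + 1) + 1 with hK
  have hK0 : 0 < K := by positivity
  refine mem_of_superset (ball_mem_nhds x (div_pos hr hK0)) fun y hy => ?_
  rw [mem_ball, dist_comm, lt_div_iff₀ hK0, mul_comm] at hy
  exact (h.joinedIn hy).mono hsub

end Quasiconvex

section Degree

variable {T : Type*} [TopologicalSpace T] {x₀ : T} {α₀ : Path x₀ x₀}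

lemma isDegreeOneLoop_self : IsDegreeOneLoop x₀ α₀ α₀ := by
  refine ⟨Path.refl x₀, ?_⟩
  rw [← Path.Homotopic.Quotient.eq]
  simp [Path.Homotopic.Quotient.mk_trans]

lemma HasDegree.add_coe {f : T → UnitAddCircle} {u : T → ℝ}
    (hf : HasDegree x₀ α₀ f 1) (hu : Continuous u) :
    HasDegree x₀ α₀ (fun x => f x + (u x : UnitAddCircle)) 1 := by
  obtain ⟨hfc, hf⟩ := hf
  refine ⟨hfc.add ((AddCircle.continuous_mk' 1).comp hu), fun x γ hγ => ?_⟩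
  obtain ⟨F⟩ := hf x γ hγ
  refine ⟨⟨⟨⟨fun st => F st +
    ((u x + (1 - (st.1 : ℝ)) * (u (γ st.2) - u x) : ℝ) : UnitAddCircle), ?_⟩, ?_, ?_⟩, ?_⟩⟩
  · exact F.continuous.add ((AddCircle.continuous_mk' 1).comp (by fun_prop))
  · intro t
    simp
  · intro t
    have h1 : F (1, t) = stdLoop 1 (f x) t := F.apply_one t
    change F (1, t) + ((u x + (1 - ((1 : I) : ℝ)) * (u (γ t) - u x) : ℝ) : UnitAddCircle) = _
    rw [h1]
    simp [stdLoop]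
    abel
  · intro s t ht
    have h1 := F.eq_fst s ht
    rcases ht with rfl | rfl
    · simp
    · simp

lemma exists_lift_of_hasDegree [PathConnectedSpace T] [LocallyPathConnectedSpace T]
    (hgen : IsGenerator x₀ α₀) {f φ : T → UnitAddCircle} {k : ℤ}
    (hf : HasDegree x₀ α₀ f 1) (hφ : HasDegree x₀ α₀ φ k) :
    ∃ g : T → ℝ, Continuous g ∧ ∀ x, φ x = k • f x + (g x : UnitAddCircle) := by
  obtain ⟨hfc, hf⟩ := hf
  obtain ⟨hφc, hφ⟩ := hφ
  set θ : C(T, UnitAddCircle) := ⟨fun x => φ x - k • f x, hφc.sub (hfc.zsmul k)⟩ with hθ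
  obtain ⟨F⟩ := hφ x₀ α₀ isDegreeOneLoop_self
  obtain ⟨F'⟩ := hf x₀ α₀ isDegreeOneLoop_self
  have hnull : Path.Homotopic (α₀.map θ.continuous) (Path.refl (θ x₀)) := by
    refine ⟨⟨⟨⟨fun st => F st - k • F' st, by fun_prop⟩, ?_, ?_⟩, ?_⟩⟩
    · intro t
      simp [hθ]
    · intro t
      have : (((k : ℝ) * (t : ℝ) : ℝ) : UnitAddCircle) = k • ((t : ℝ) : UnitAddCircle) := by
        rw [← AddCircle.coe_zsmul, zsmul_eq_mul]
      have h1 : F (1, t) = stdLoop k (φ x₀) t := F.apply_one t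
      have h2 : F' (1, t) = stdLoop 1 (f x₀) t := F'.apply_one t
      change F (1, t) - k • F' (1, t) = φ x₀ - k • f x₀
      rw [h1, h2]
      change φ x₀ + (((k : ℝ) * (t : ℝ) : ℝ) : UnitAddCircle) -
        k • (f x₀ + ((((1 : ℤ) : ℝ) * (t : ℝ) : ℝ) : UnitAddCircle)) = _
      rw [this, Int.cast_one, one_mul, smul_add]
      abel
    · intro s t ht
      rcases ht with rfl | rfl <;> simp [hθ]
  have hone : FundamentalGroup.map θ x₀ (FundamentalGroup.fromPath ⟦α₀⟧) = 1 :=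
    Quotient.sound hnull
  have hall : ∀ q : FundamentalGroup T x₀, FundamentalGroup.map θ x₀ q = 1 := by
    intro q
    obtain ⟨j, hj⟩ := hgen.2 q
    have hj' : (FundamentalGroup.fromPath ⟦α₀⟧ : FundamentalGroup T x₀) ^ j = q := hj
    rw [← hj', map_zpow, hone, one_zpow]
  obtain ⟨e₀, he₀⟩ := QuotientAddGroup.mk_surjective (θ x₀)
  have hle : (FundamentalGroup.map θ x₀).range ≤ (FundamentalGroup.mapOfEq
      (⟨_, (AddCircle.isCoveringMap_coe (1 : ℝ)).continuous⟩ : C(ℝ, UnitAddCircle)) he₀).range := by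
    rintro _ ⟨q, rfl⟩
    rw [hall]
    exact one_mem _
  obtain ⟨g, ⟨-, hg⟩, -⟩ :=
    (AddCircle.isCoveringMap_coe (1 : ℝ)).existsUnique_continuousMap_lifts_of_range_le he₀ hle
  refine ⟨g, g.continuous, fun x => ?_⟩
  have : (g x : UnitAddCircle) = φ x - k • f x := congrFun hg x
  rw [this]
  abel

end Degree

section Dichotomy

variable {T : Type*} [MetricSpace T]

lemma UPath.integral_eq_top_of_leaves {ρ : T → ℝ≥0∞} {x : T} {r : ℝ} (hr : 0 < r) (γ : UPath T)
    (hab : γ.a < γ.b) (hρ : ∀ y, r / 2 ≤ dist y x → ρ y = ⊤) (hleave : ¬ γ.InSet (ball x r)) :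
    γ.integral ρ = ⊤ := by
  obtain ⟨t₀, ht₀, hout⟩ : ∃ t ∈ Icc γ.a γ.b, γ.toFun t ∉ ball x r := by
    unfold UPath.InSet at hleave
    push Not at hleave
    exact hleave
  rw [mem_ball, not_lt] at hout
  set S := Icc (max γ.a (t₀ - r / 2)) (min γ.b (t₀ + r / 2)) with hS
  have hsub : S ⊆ Icc γ.a γ.b := Icc_subset_Icc (le_max_left _ _) (min_le_left _ _)
  have hpos : volume S ≠ 0 := by
    rw [hS, Real.volume_Icc, ne_eq, ENNReal.ofReal_eq_zero, not_le, sub_pos]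
    refine max_lt (lt_min hab ?_) (lt_min ?_ ?_) <;> linarith [ht₀.1, ht₀.2]
  rw [eq_top_iff]
  calc (⊤ : ℝ≥0∞) = ∫⁻ _ in S, ⊤ := by rw [setLIntegral_const, ENNReal.top_mul hpos]
    _ ≤ ∫⁻ t in S, ρ (γ.toFun t) := by
      refine setLIntegral_mono' measurableSet_Icc fun t ht => ?_
      rw [hρ]
      have h1 := γ.lip.dist_le_mul t (hsub ht) t₀ ht₀
      rw [NNReal.coe_one, one_mul, Real.dist_eq] at h1
      have h2 : |t - t₀| ≤ r / 2 := by
        rw [abs_le]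
        constructor
        · linarith [(le_max_right _ _).trans ht.1]
        · linarith [ht.2.trans (min_le_right _ _)]
      have h3 := dist_triangle_left (γ.toFun t₀) x (γ.toFun t)
      linarith
    _ ≤ γ.integral ρ := lintegral_mono_set hsub

open scoped Classical in
/-- The maximum of the characteristic function of `P` and of the cutoff functions of the balls
`ball (c i) (r i)`. -/
def coverBump (P : Set T) (c : ℕ → T) (r : ℕ → ℝ) (y : T) : ℝ :=
  if y ∈ P then 1 else ⨆ i, cutoff (c i) (r i) y

section coverBump

variable {P : Set T} {c : ℕ → T} {r : ℕ → ℝ} {y : T}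

lemma bddAbove_cutoff : BddAbove (range fun i => cutoff (c i) (r i) y) :=
  ⟨1, by rintro _ ⟨i, rfl⟩; exact cutoff_le_one _ _ _⟩

lemma coverBump_of_mem (hy : y ∈ P) : coverBump P c r y = 1 := if_pos hy

lemma coverBump_of_notMem (hy : y ∉ P) : coverBump P c r y = ⨆ i, cutoff (c i) (r i) y :=
  if_neg hy

lemma coverBump_nonneg : 0 ≤ coverBump P c r y := by
  unfold coverBump
  split_ifs
  · exact zero_le_one
  · exact (cutoff_nonneg _ _ _).trans (le_ciSup bddAbove_cutoff 0)

lemma coverBump_le_one : coverBump P c r y ≤ 1 := by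
  unfold coverBump
  split_ifs
  · exact le_rfl
  · exact ciSup_le fun i => cutoff_le_one _ _ _

lemma measurable_coverBump [MeasurableSpace T] [BorelSpace T] (hP : MeasurableSet P) :
    Measurable (coverBump P c r) :=
  Measurable.ite hP measurable_const
    (Measurable.iSup fun i => (continuous_cutoff (c i) (r i)).measurable)

/-- The upper gradient of `coverBump` in the ball `ball x s`. -/
def coverBumpGrad (c : ℕ → T) (r : ℕ → ℝ) (x : T) (s : ℝ) (y : T) : ℝ≥0∞ :=
  (∑' i, (2 / ENNReal.ofReal (r i)) * (ball (c i) (2 * r i)).indicator (fun _ => 1) y) +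
    (ball x (s / 2))ᶜ.indicator (fun _ => ⊤) y

lemma measurable_coverBumpGrad [MeasurableSpace T] [BorelSpace T] {x : T} {s : ℝ} :
    Measurable (coverBumpGrad c r x s) := by
  refine Measurable.add (Measurable.tsum fun i => ?_) ?_
  · exact (measurable_const.indicator measurableSet_ball).const_mul _
  · exact measurable_const.indicator measurableSet_ball.compl

lemma isUpperGradient_coverBump {K : Set T} {x : T} {s : ℝ} (hs : 0 < s)
    (hcross : ∀ γ : UPath T, γ.InSet (ball x s) → (γ.start ∈ P ↔ γ.finish ∉ P) →
      ∃ t ∈ Icc γ.a γ.b, γ.toFun t ∈ K)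
    (hcover : K ∩ ball x s ⊆ ⋃ i, ball (c i) (r i)) :
    IsUpperGradient (coverBump P c r) (coverBumpGrad c r x s) := by
  intro γ
  by_cases hIn : γ.InSet (ball x s)
  swap
  · rcases γ.hab.eq_or_lt with hab | hab
    · have : γ.start = γ.finish := by rw [UPath.start, UPath.finish, hab]
      rw [this, edist_self]
      exact zero_le
    · rw [γ.integral_eq_top_of_leaves hs hab _ hIn]
      · exact le_top
      · intro y hy
        have : y ∈ (ball x (s / 2))ᶜ := by simpa using hy
        simp [coverBumpGrad, this]
  rcases eq_or_ne (γ.integral (coverBumpGrad c r x s)) ⊤ with htop | htop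
  · rw [htop]; exact le_top
  set J := (γ.integral (coverBumpGrad c r x s)).toReal with hJ
  have hJ0 : 0 ≤ J := ENNReal.toReal_nonneg
  have hstep : ∀ i, ∀ t t', γ.a ≤ t → t ≤ t' → t' ≤ γ.b →
      |cutoff (c i) (r i) (γ.toFun t) - cutoff (c i) (r i) (γ.toFun t')| ≤ J := by
    intro i t t' ha htt' hb
    have h1 := isUpperGradient_cutoff (c i) (r i) (γ.sub t t' htt' ha hb)
    have h2 := h1.trans (γ.integral_sub_le t t' htt' ha hb _)
    have h3 : γ.integral (fun y => (2 / ENNReal.ofReal (r i)) *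
        (ball (c i) (2 * r i)).indicator (fun _ => 1) y) ≤
        γ.integral (coverBumpGrad c r x s) := by
      refine lintegral_mono fun t => ?_
      exact (ENNReal.le_tsum i).trans (le_add_of_nonneg_right zero_le)
    have h4 := ENNReal.toReal_mono htop (h2.trans h3)
    rwa [edist_dist, ENNReal.toReal_ofReal dist_nonneg, Real.dist_eq] at h4
  have hsup : ∀ t t', t ∈ Icc γ.a γ.b → t' ∈ Icc γ.a γ.b →
      (⨆ i, cutoff (c i) (r i) (γ.toFun t)) ≤ (⨆ i, cutoff (c i) (r i) (γ.toFun t')) + J := by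
    intro t t' ht ht'
    refine ciSup_le fun i => ?_
    have h1 : cutoff (c i) (r i) (γ.toFun t') ≤ ⨆ i, cutoff (c i) (r i) (γ.toFun t') :=
      le_ciSup bddAbove_cutoff i
    have h2 : cutoff (c i) (r i) (γ.toFun t) - cutoff (c i) (r i) (γ.toFun t') ≤ J := by
      rcases le_total t t' with h | h
      · exact (le_abs_self _).trans (hstep i t t' ht.1 h ht'.2)
      · refine (le_abs_self _).trans ?_
        rw [abs_sub_comm]
        exact hstep i t' t ht'.1 h ht.2
    linarith
  have hone : (γ.start ∈ P ↔ γ.finish ∉ P) → ∀ t' ∈ Icc γ.a γ.b,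
      1 ≤ (⨆ i, cutoff (c i) (r i) (γ.toFun t')) + J := by
    intro hdiff t' ht'
    obtain ⟨t, ht, htK⟩ := hcross γ hIn hdiff
    obtain ⟨i, hi⟩ := mem_iUnion.1 (hcover ⟨htK, hIn t ht⟩)
    refine le_trans ?_ (hsup t t' ht ht')
    rw [← cutoff_eq_one (c i) (r i) hi]
    exact le_ciSup bddAbove_cutoff i
  have ha : γ.a ∈ Icc γ.a γ.b := left_mem_Icc.2 γ.hab
  have hb : γ.b ∈ Icc γ.a γ.b := right_mem_Icc.2 γ.hab
  rw [edist_dist, Real.dist_eq, ← ENNReal.ofReal_toReal htop, ← hJ]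
  apply ENNReal.ofReal_le_ofReal
  by_cases h1 : γ.start ∈ P <;> by_cases h2 : γ.finish ∈ P
  · rw [coverBump_of_mem h1, coverBump_of_mem h2, sub_self, abs_zero]
    exact hJ0
  · have h3 := coverBump_le_one (P := P) (c := c) (r := r) (y := γ.finish)
    rw [coverBump_of_mem h1, abs_of_nonneg (by linarith), coverBump_of_notMem h2]
    have h4 : 1 ≤ (⨆ i, cutoff (c i) (r i) γ.finish) + J := hone (by tauto) γ.b hb
    linarith
  · have h3 := coverBump_le_one (P := P) (c := c) (r := r) (y := γ.start)
    rw [coverBump_of_mem h2, abs_sub_comm, abs_of_nonneg (by linarith), coverBump_of_notMem h1]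
    have h4 : 1 ≤ (⨆ i, cutoff (c i) (r i) γ.start) + J := hone (by tauto) γ.a ha
    linarith
  · rw [coverBump_of_notMem h1, coverBump_of_notMem h2, abs_sub_le_iff]
    constructor
    · rw [sub_le_iff_le_add']
      exact hsup _ _ ha hb
    · rw [sub_le_iff_le_add']
      exact hsup _ _ hb ha

end coverBump

variable [CompactSpace T] [MeasurableSpace T] [BorelSpace T] {μ : Measure T} {D A : ℝ≥0} {p : ℕ}

/-- If `K` separates `P` from its complement in a ball and has an efficient cover, then in a
smaller concentric ball either `P` or its complement has small measure. -/
lemma PIData.measure_le_of_cover (h : PIData μ D A p) {P K : Set T} (hP : MeasurableSet P)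
    {x : T} {s ε : ℝ} (hε : 0 < ε) (hεs : 2 ^ p * ε ≤ s / 2)
    (hcross : ∀ γ : UPath T, γ.InSet (ball x s) → (γ.start ∈ P ↔ γ.finish ∉ P) →
      ∃ t ∈ Icc γ.a γ.b, γ.toFun t ∈ K)
    {c : ℕ → T} {r : ℕ → ℝ} (hr : ∀ i, r i ≤ ε)
    (hcover : K ∩ ball x s ⊆ ⋃ i, ball (c i) (r i)) :
    let X := (4 * A + 1) * D * ENNReal.ofReal ε *
      ∑' i, μ (ball (c i) (r i)) / ENNReal.ofReal (r i)
    μ (ball x ε \ P) ≤ X ∨ μ (ball x ε ∩ P) ≤ X := by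
  intro X
  have := h.isFiniteMeasure
  have hs : 0 < s := by
    have : 0 < 2 ^ p * ε := by positivity
    linarith
  set u := coverBump P c r with hu
  set E := ⋃ i, ball (c i) (2 * r i) with hE
  set M := ∑' i, μ (ball (c i) (r i)) / ENNReal.ofReal (r i) with hM
  have humeas : Measurable u := measurable_coverBump hP
  have hint : Integrable u μ := by
    refine Integrable.of_bound humeas.aestronglyMeasurable 1 (ae_of_all _ fun y => ?_)
    rw [Real.norm_eq_abs, abs_of_nonneg coverBump_nonneg]
    exact coverBump_le_one
  have hpoin := h.poincare u _ hint.locallyIntegrable measurable_coverBumpGrad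
    (isUpperGradient_coverBump hs hcross hcover) x ε hε
  set m := ⨍ z in ball x ε, u z ∂μ with hm
  have hgrad : ∫⁻ y in ball x (2 ^ p * ε), coverBumpGrad c r x s y ∂μ ≤ 2 * D * M := by
    calc ∫⁻ y in ball x (2 ^ p * ε), coverBumpGrad c r x s y ∂μ
        = ∫⁻ y in ball x (2 ^ p * ε), ∑' i, (2 / ENNReal.ofReal (r i)) *
            (ball (c i) (2 * r i)).indicator (fun _ => 1) y ∂μ := by
          refine setLIntegral_congr_fun measurableSet_ball fun y hy => ?_
          have : y ∉ (ball x (s / 2))ᶜ := fun hc => hc (ball_subset_ball hεs hy)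
          simp only [coverBumpGrad, indicator_of_notMem this, add_zero]
      _ ≤ ∫⁻ y, ∑' i, (2 / ENNReal.ofReal (r i)) *
            (ball (c i) (2 * r i)).indicator (fun _ => 1) y ∂μ := setLIntegral_le_lintegral _ _
      _ = ∑' i, (2 / ENNReal.ofReal (r i)) * μ (ball (c i) (2 * r i)) := by
          rw [lintegral_tsum]
          · refine tsum_congr fun i => ?_
            rw [lintegral_const_mul _ (measurable_const.indicator measurableSet_ball),
              lintegral_indicator measurableSet_ball, setLIntegral_const, one_mul]
          · exact fun i =>
              ((measurable_const.indicator measurableSet_ball).const_mul _).aemeasurable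
      _ ≤ ∑' i, 2 * D * (μ (ball (c i) (r i)) / ENNReal.ofReal (r i)) := by
          refine ENNReal.tsum_le_tsum fun i => ?_
          calc (2 / ENNReal.ofReal (r i)) * μ (ball (c i) (2 * r i))
              ≤ (2 / ENNReal.ofReal (r i)) * (D * μ (ball (c i) (r i))) := by
                gcongr; exact h.dbl _ _
            _ = 2 * D * (μ (ball (c i) (r i)) / ENNReal.ofReal (r i)) := by
                simp only [div_eq_mul_inv]; ring
      _ = 2 * D * M := ENNReal.tsum_mul_left
  have hE : μ E ≤ D * ENNReal.ofReal ε * M := by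
    calc μ E ≤ ∑' i, μ (ball (c i) (2 * r i)) := measure_iUnion_le _
      _ ≤ ∑' i, D * ENNReal.ofReal ε * (μ (ball (c i) (r i)) / ENNReal.ofReal (r i)) := by
          refine ENNReal.tsum_le_tsum fun i => ?_
          rcases le_or_gt (r i) 0 with hri | hri
          · rw [ball_eq_empty.2 (by linarith)]
            simp
          · have h0 : ENNReal.ofReal (r i) ≠ 0 := by simpa using hri
            calc μ (ball (c i) (2 * r i)) ≤ D * μ (ball (c i) (r i)) := h.dbl _ _
              _ = D * (ENNReal.ofReal (r i) *
                    (μ (ball (c i) (r i)) / ENNReal.ofReal (r i))) := by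
                  rw [ENNReal.mul_div_cancel h0 ENNReal.ofReal_ne_top]
              _ ≤ D * (ENNReal.ofReal ε *
                    (μ (ball (c i) (r i)) / ENNReal.ofReal (r i))) := by
                  gcongr; exact hr i
              _ = _ := by rw [mul_assoc]
      _ = D * ENNReal.ofReal ε * M := ENNReal.tsum_mul_left
  have hcheb : ∀ S ⊆ ball x ε, MeasurableSet S → (∀ y ∈ S, 1 / 2 ≤ |u y - m|) →
      μ S ≤ 4 * A * D * ENNReal.ofReal ε * M := by
    intro S hS hSm hSu
    have h1 : ENNReal.ofReal (1 / 2) * μ S ≤ A * ENNReal.ofReal ε * (2 * D * M) := by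
      calc ENNReal.ofReal (1 / 2) * μ S = ∫⁻ _ in S, ENNReal.ofReal (1 / 2) ∂μ := by
            rw [setLIntegral_const]
        _ ≤ ∫⁻ y in S, ENNReal.ofReal |u y - m| ∂μ :=
            setLIntegral_mono' hSm fun y hy => ENNReal.ofReal_le_ofReal (hSu y hy)
        _ ≤ ∫⁻ y in ball x ε, ENNReal.ofReal |u y - m| ∂μ := lintegral_mono_set hS
        _ ≤ _ := hpoin.trans (by gcongr)
    have h2 : (2 : ℝ≥0∞) * ENNReal.ofReal (1 / 2) = 1 := by
      rw [← ENNReal.ofReal_ofNat, ← ENNReal.ofReal_mul (by norm_num)]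
      norm_num
    calc μ S = 2 * (ENNReal.ofReal (1 / 2) * μ S) := by rw [← mul_assoc, h2, one_mul]
      _ ≤ 2 * (A * ENNReal.ofReal ε * (2 * D * M)) := by gcongr
      _ = _ := by ring
  have hX : X = 4 * A * D * ENNReal.ofReal ε * M + D * ENNReal.ofReal ε * M := by
    simp only [X]; ring
  rcases le_or_gt (1 / 2) m with hm2 | hm2
  · left
    have hEm : MeasurableSet E := MeasurableSet.iUnion fun i => measurableSet_ball
    have hsub : ball x ε \ P ⊆ (ball x ε \ (P ∪ E)) ∪ E := by
      rintro y ⟨hy, hyP⟩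
      by_cases hyE : y ∈ E
      · exact Or.inr hyE
      · exact Or.inl ⟨hy, fun hc => hc.elim hyP hyE⟩
    rw [hX]
    refine (measure_mono hsub).trans ((measure_union_le _ _).trans (add_le_add ?_ hE))
    refine hcheb _ sdiff_subset (measurableSet_ball.diff (hP.union hEm)) fun y hy => ?_
    have hyP : y ∉ P := fun hc => hy.2 (Or.inl hc)
    have hy0 : u y = 0 := by
      rw [hu, coverBump_of_notMem hyP]
      have : ∀ i, cutoff (c i) (r i) y = 0 := fun i => by
        have hyi : y ∉ ball (c i) (2 * r i) := fun hc => hy.2 (Or.inr (mem_iUnion.2 ⟨i, hc⟩))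
        rw [mem_ball, not_lt] at hyi
        by_cases hri : 0 < r i
        · exact cutoff_eq_zero _ _ (by linarith)
        · rw [cutoff, if_neg hri]
      simp [this]
    rw [hy0, zero_sub, abs_neg]
    exact hm2.trans (le_abs_self m)
  · right
    rw [hX]
    refine (hcheb _ inter_subset_left (measurableSet_ball.inter hP) fun y hy => ?_).trans
      (le_add_of_nonneg_right zero_le)
    rw [hu, coverBump_of_mem hy.2]
    refine le_trans ?_ (le_abs_self _)
    linarith

end Dichotomy

section Angle

/-- The representative in `[-1/2, 1/2)` of a point of `ℝ/ℤ`. -/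
def angle (y : UnitAddCircle) : ℝ := AddCircle.equivIco 1 (-1 / 2) y

lemma coe_angle (y : UnitAddCircle) : (angle y : UnitAddCircle) = y :=
  (AddCircle.equivIco 1 (-1 / 2)).symm_apply_apply y

lemma angle_mem (y : UnitAddCircle) : -1 / 2 ≤ angle y ∧ angle y < 1 / 2 := by
  have := (AddCircle.equivIco (1 : ℝ) (-1 / 2) y).2
  refine ⟨this.1, this.2.trans_le (by norm_num)⟩

lemma abs_angle (y : UnitAddCircle) : |angle y| = ‖y‖ := by
  conv_rhs => rw [← coe_angle y]
  refine ((AddCircle.norm_coe_eq_abs_iff 1 one_ne_zero).2 ?_).symm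
  obtain ⟨h1, h2⟩ := angle_mem y
  rw [abs_one, abs_le]
  constructor <;> linarith

lemma continuousAt_angle {y : UnitAddCircle} (hy : ‖y‖ < 1 / 2) : ContinuousAt angle y := by
  have hne : y ≠ ((-1 / 2 : ℝ) : UnitAddCircle) := by
    rintro rfl
    rw [(AddCircle.norm_coe_eq_abs_iff 1 one_ne_zero).2 (by norm_num)] at hy
    norm_num at hy
  exact continuous_subtype_val.continuousAt.comp (AddCircle.continuousAt_equivIco 1 (-1 / 2) hne)

lemma measurable_angle : Measurable angle :=
  measurable_subtype_coe.comp (AddCircle.measurableEquivIco 1 (-1 / 2)).measurable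

lemma angle_eq_zero {y : UnitAddCircle} (hy : angle y = 0) : y = 0 := by
  rw [← coe_angle y, hy, AddCircle.coe_zero]

lemma norm_coe_le_abs (t : ℝ) : ‖(t : UnitAddCircle)‖ ≤ |t| := by
  rw [UnitAddCircle.norm_eq]
  simpa using round_le t 0

lemma equivIco_zero_eq (y : UnitAddCircle) :
    ((AddCircle.equivIco 1 0 y : Ico (0 : ℝ) (0 + 1)) : ℝ) =
      if 0 ≤ angle y then angle y else angle y + 1 := by
  obtain ⟨h1, h2⟩ := angle_mem y
  conv_lhs => rw [← coe_angle y, AddCircle.coe_equivIco_mk_apply, div_one, mul_one]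
  split_ifs with h
  · exact Int.fract_eq_self.2 ⟨h, by linarith⟩
  · rw [Int.fract_eq_iff]
    exact ⟨by linarith, by linarith, -1, by push_cast; ring⟩

end Angle

section Unfold

variable {T : Type*} [MetricSpace T]

lemma exists_truncated_dist (G : Set T) {R : ℝ} (hR : 0 < R) :
    ∃ f : T → ℝ, (∀ x y, f x ≤ f y + dist x y) ∧ (∀ x, 0 ≤ f x) ∧ (∀ x ∈ G, f x = 0) ∧
      ∀ x, f x < R → ∃ g ∈ G, dist x g < R := by
  rcases G.eq_empty_or_nonempty with rfl | hG
  · exact ⟨fun _ => R, fun x y => by linarith [dist_nonneg (x := x) (y := y)], fun _ => hR.le,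
      by simp, fun x hx => absurd hx (lt_irrefl _)⟩
  · refine ⟨fun x => infDist x G, fun x y => infDist_le_infDist_add_dist, fun x => infDist_nonneg,
      fun x hx => infDist_zero_of_mem hx, fun x hx => (infDist_lt_iff hG).1 hx⟩

/-- A circle valued map can be changed within its homotopy class to a Lipschitz map whose upper
gradient lives near `G`, as soon as the two sides of its zero level set can be told apart
consistently off `G`. -/
lemma exists_unfold {φ : T → UnitAddCircle} (hφc : Continuous φ) {G : Set T} {Q : T → Prop}
    {n : ℕ} (hn : 0 < n) {ε : ℝ} (hε : 0 < ε) (hεn : ε ≤ 1 / n)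
    (hφ : ∀ x y, dist x y < 1 / n → dist (φ x) (φ y) < 1 / 16)
    (hG : ∀ g ∈ G, ‖φ g‖ < 1 / 16)
    (hQ : ∀ x, 1 / 4 ≤ ‖φ x‖ → (Q x ↔ 0 ≤ angle (φ x)))
    (hsep : ∀ x y, x ∉ G → y ∉ G → dist x y < ε → ‖φ x‖ < 3 / 8 → (Q x ↔ Q y)) :
    ∃ v : T → ℝ, Continuous v ∧
      (∃ L : ℝ≥0, LipschitzWith L fun x => φ x + (v x : UnitAddCircle)) ∧
      IsUpperGradient (fun x => φ x + (v x : UnitAddCircle))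
        fun x => (n : ℝ≥0∞) * {x | ∃ g ∈ G, dist x g < 1 / n}.indicator (fun _ => 1) x := by
  classical
  have hn' : (0 : ℝ) < n := by exact_mod_cast hn
  obtain ⟨d, hd1, hd0, hdG, hdlt⟩ := exists_truncated_dist G (one_div_pos.2 hn')
  have hdcont : Continuous d := by
    refine (LipschitzWith.of_le_add fun x y => ?_ : LipschitzWith 1 d).continuous
    exact hd1 x y
  set m : T → ℝ := fun x => min (1 / 2) (n * d x) with hm
  have hm0 : ∀ x, 0 ≤ m x := fun x => le_min (by norm_num) (mul_nonneg hn'.le (hd0 x))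
  have hmG : ∀ x ∈ G, m x = 0 := fun x hx => by simp [hm, hdG x hx]
  have hmhalf : ∀ x, 1 / (2 * n) ≤ d x → m x = 1 / 2 := by
    intro x hx
    refine min_eq_left ?_
    rw [div_le_iff₀ (by positivity)] at hx
    linarith
  have hm1 : ∀ x y, |m x - m y| ≤ n * dist x y := by
    have h1 : ∀ x y, m x - m y ≤ n * dist x y := by
      intro x y
      have h2 : (n : ℝ) * d x ≤ n * d y + n * dist x y := by
        rw [← mul_add]; exact mul_le_mul_of_nonneg_left (hd1 x y) hn'.le
      have h3 : 0 ≤ (n : ℝ) * dist x y := by positivity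
      rw [sub_le_iff_le_add']
      rcases min_choice (1 / 2) ((n : ℝ) * d y) with h | h
      · change m x ≤ min (1 / 2) ((n : ℝ) * d y) + _
        rw [h]
        exact (min_le_left _ _).trans (by linarith)
      · change m x ≤ min (1 / 2) ((n : ℝ) * d y) + _
        rw [h]
        exact (min_le_right _ _).trans h2
    intro x y
    rw [abs_sub_le_iff]
    exact ⟨h1 x y, by rw [dist_comm]; exact h1 y x⟩
  set ζ : T → ℝ := fun x => if Q x then 1 / 2 + m x else 1 / 2 - m x with hζ
  have hnorm : ∀ x y, dist x y < 1 / n → ‖φ x‖ < ‖φ y‖ + 1 / 16 := by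
    intro x y hxy
    have h1 := hφ x y hxy
    rw [dist_eq_norm] at h1
    have h2 := norm_sub_norm_le (φ x) (φ y)
    linarith
  have hfar : ∀ x, 1 / 4 ≤ ‖φ x‖ → 1 / n ≤ d x := by
    intro x hx
    by_contra! hlt
    obtain ⟨g, hg, hxg⟩ := hdlt x hlt
    linarith [hnorm x g hxg, hG g hg]
  have hhalf : (1 : ℝ) / (2 * n) ≤ 1 / n := by
    apply one_div_le_one_div_of_le hn'; linarith
  have hζone : ∀ x, 1 / (2 * n) ≤ d x → (ζ x : UnitAddCircle) = 0 := by
    intro x hx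
    simp only [hζ, hmhalf x hx]
    split_ifs
    · have : ((1 / 2 + 1 / 2 : ℝ) : UnitAddCircle) = ((1 : ℝ) : UnitAddCircle) := by norm_num
      rw [this]
      exact AddCircle.coe_period 1
    · simp
  have hζG : ∀ x ∈ G, ζ x = 1 / 2 := fun x hx => by simp [hζ, hmG x hx]
  have hζm : ∀ x, |ζ x - 1 / 2| = m x := by
    intro x
    simp only [hζ]
    split_ifs
    · rw [add_sub_cancel_left, abs_of_nonneg (hm0 x)]
    · rw [sub_sub_cancel_left, abs_neg, abs_of_nonneg (hm0 x)]
  have hζlip : ∀ x y, dist x y < ε → ‖φ x‖ < 3 / 8 → |ζ x - ζ y| ≤ n * dist x y := by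
    intro x y hxy hx
    by_cases hxG : x ∈ G
    · rw [hζG x hxG, abs_sub_comm, hζm]
      have := hm1 y x
      rwa [hmG x hxG, sub_zero, abs_of_nonneg (hm0 y), dist_comm] at this
    by_cases hyG : y ∈ G
    · rw [hζG y hyG, hζm]
      have := hm1 x y
      rwa [hmG y hyG, sub_zero, abs_of_nonneg (hm0 x)] at this
    have hQxy := hsep x y hxG hyG hxy hx
    have := hm1 x y
    simp only [hζ]
    by_cases hQx : Q x
    · rw [if_pos hQx, if_pos (hQxy.1 hQx)]
      rwa [add_sub_add_left_eq_sub]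
    · rw [if_neg hQx, if_neg (fun h => hQx (hQxy.2 h))]
      rwa [sub_sub_sub_cancel_left, abs_sub_comm]
  set ψ : T → UnitAddCircle := fun x => (ζ x : UnitAddCircle) with hψ
  have hψlip : ∀ x y, dist x y < ε → dist (ψ x) (ψ y) ≤ n * dist x y := by
    intro x y hxy
    rcases lt_or_ge ‖φ x‖ (3 / 8) with hx | hx
    · rw [dist_eq_norm, hψ, ← AddCircle.coe_sub]
      exact (norm_coe_le_abs _).trans (hζlip x y hxy hx)
    · have hy : 1 / 4 ≤ ‖φ y‖ := by linarith [hnorm x y (hxy.trans_le hεn)]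
      have h1 : ψ x = 0 := hζone x (hhalf.trans (hfar x (by linarith)))
      have h2 : ψ y = 0 := hζone y (hhalf.trans (hfar y hy))
      rw [h1, h2, dist_self]
      positivity
  have hψeq : (fun x => φ x + ((ζ x - angle (φ x) : ℝ) : UnitAddCircle)) = ψ := by
    funext x
    rw [AddCircle.coe_sub, coe_angle]
    simp [hψ]
  refine ⟨fun x => ζ x - angle (φ x), ?_, ?_, ?_⟩
  · rw [continuous_iff_continuousAt]
    intro x
    rcases lt_or_ge ‖φ x‖ (3 / 8) with hx | hx
    · refine ContinuousAt.sub ?_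
        ((continuousAt_angle (by linarith)).comp hφc.continuousAt)
      rw [Metric.continuousAt_iff]
      intro η hη
      refine ⟨min ε (η / n), lt_min hε (by positivity), fun y hy => ?_⟩
      rw [dist_comm, Real.dist_eq]
      rw [dist_comm] at hy
      refine (hζlip x y (hy.trans_le (min_le_left _ _)) hx).trans_lt ?_
      have := hy.trans_le (min_le_right _ _)
      rwa [lt_div_iff₀ hn', mul_comm] at this
    · have hne : φ x ≠ ((0 : ℝ) : UnitAddCircle) := by
        intro h0
        rw [h0, AddCircle.coe_zero, norm_zero] at hx
        linarith
      have hcont : ContinuousAt (fun y => 1 - ((AddCircle.equivIco (1 : ℝ) 0 (φ y) :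
          Ico (0 : ℝ) (0 + 1)) : ℝ)) x :=
        continuousAt_const.sub (continuous_subtype_val.continuousAt.comp
          ((AddCircle.continuousAt_equivIco 1 0 hne).comp hφc.continuousAt))
      refine hcont.congr ?_
      filter_upwards [ball_mem_nhds x (one_div_pos.2 hn')] with y hy
      have hy : 1 / 4 ≤ ‖φ y‖ := by linarith [hnorm x y (by rwa [dist_comm])]
      have hmy := hmhalf y (hhalf.trans (hfar y hy))
      rw [equivIco_zero_eq]
      simp only [hζ, hmy]
      by_cases hQy : Q y
      · rw [if_pos hQy, if_pos ((hQ y hy).1 hQy)]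
        ring
      · rw [if_neg hQy, if_neg (fun h => hQy ((hQ y hy).2 h))]
        ring
  · refine ⟨(n : ℝ≥0) + (1 / ε).toNNReal, ?_⟩
    rw [hψeq]
    refine LipschitzWith.of_dist_le_mul fun x y => ?_
    rw [NNReal.coe_add, NNReal.coe_natCast, Real.coe_toNNReal _ (by positivity), add_mul]
    rcases lt_or_ge (dist x y) ε with hxy | hxy
    · have : 0 ≤ 1 / ε * dist x y := by positivity
      linarith [hψlip x y hxy]
    · have h1 : dist (ψ x) (ψ y) ≤ 1 / 2 := by
        rw [dist_eq_norm]
        simpa using AddCircle.norm_le_half_period 1 one_ne_zero (x := ψ x - ψ y)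
      have h2 : 1 ≤ 1 / ε * dist x y := by
        rw [one_div_mul_eq_div, le_div_iff₀ hε]
        linarith
      have h3 : 0 ≤ (n : ℝ) * dist x y := by positivity
      linarith
  · rw [hψeq]
    apply isUpperGradient_of_local
    intro x
    rcases lt_or_ge (d x) (1 / n) with hx | hx
    · refine ⟨{y | d y < 1 / n} ∩ ball x (ε / 2), Filter.inter_mem
        ((isOpen_lt hdcont continuous_const).mem_nhds hx) (ball_mem_nhds _ (by positivity)),
        Or.inl ⟨fun y hy => hdlt y hy.1, fun y hy z hz => ?_⟩⟩
      have hyz : dist y z < ε := by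
        have := dist_triangle_right y z x
        linarith [mem_ball.1 hy.2, mem_ball.1 hz.2]
      rw [edist_dist, edist_dist, ← ENNReal.ofReal_natCast, ← ENNReal.ofReal_mul hn'.le]
      exact ENNReal.ofReal_le_ofReal (hψlip y z hyz)
    · refine ⟨{y | 1 / (2 * n) < d y}, (isOpen_lt continuous_const hdcont).mem_nhds ?_,
        Or.inr fun y hy z hz => ?_⟩
      · refine lt_of_lt_of_le ?_ hx
        apply one_div_lt_one_div_of_lt hn'
        linarith
      · have h1 : ψ y = 0 := hζone y (le_of_lt hy)
        have h2 : ψ z = 0 := hζone z (le_of_lt hz)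
        rw [h1, h2]

end Unfold

lemma IsUpperGradient.mono {X : Type*} [PseudoMetricSpace X] {Y : Type*} [PseudoEMetricSpace Y]
    {u : X → Y} {ρ ρ' : X → ℝ≥0∞} (h : IsUpperGradient u ρ) (hle : ∀ x, ρ x ≤ ρ' x) :
    IsUpperGradient u ρ' :=
  fun γ => (h γ).trans (lintegral_mono fun _ => hle _)

lemma norm_coe_ge_of_mem {t : ℝ} (h1 : 1 / 16 ≤ t) (h2 : t ≤ 15 / 16) :
    1 / 16 ≤ ‖(t : UnitAddCircle)‖ := by
  rw [UnitAddCircle.norm_eq]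
  rcases le_or_gt (round t) 0 with h | h
  · have h' : (round t : ℝ) ≤ 0 := by exact_mod_cast h
    exact le_trans (by linarith) (le_abs_self _)
  · have h' : (1 : ℝ) ≤ round t := by exact_mod_cast h
    exact le_trans (by linarith) (neg_le_abs _)

lemma angle_nonneg_iff_of_dist_lt {y z : UnitAddCircle} (hy1 : 1 / 4 ≤ ‖y‖) (hy2 : ‖y‖ < 7 / 16)
    (hyz : dist y z < 1 / 16) : 0 ≤ angle y ↔ 0 ≤ angle z := by
  rw [← abs_angle] at hy1 hy2
  obtain ⟨hz1, hz2⟩ := angle_mem z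
  constructor
  · intro h
    by_contra! hz
    rw [abs_of_nonneg h] at hy1 hy2
    have := norm_coe_ge_of_mem (t := angle y - angle z) (by linarith) (by linarith)
    rw [AddCircle.coe_sub, coe_angle, coe_angle, ← dist_eq_norm] at this
    linarith
  · intro h
    by_contra! hy
    rw [abs_of_neg hy] at hy1 hy2
    have := norm_coe_ge_of_mem (t := angle z - angle y) (by linarith) (by linarith)
    rw [AddCircle.coe_sub, coe_angle, coe_angle, ← dist_eq_norm, dist_comm] at this
    linarith

lemma codimH_mono {T : Type*} [MetricSpace T] [MeasurableSpace T] (μ : Measure T) {S S' : Set T}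
    (h : S ⊆ S') : codimH μ S ≤ codimH μ S' :=
  iSup₂_mono fun _ _ => iInf₂_mono fun _ _ => iInf_mono fun _ =>
    le_iInf fun h' => iInf_le_of_le (h.trans h') le_rfl

lemma codimH_empty {T : Type*} [MetricSpace T] [MeasurableSpace T] [Nonempty T] (μ : Measure T) :
    codimH μ ∅ = 0 := by
  simp only [codimH, ENNReal.iSup_eq_zero]
  intro δ hδ
  rw [← nonpos_iff_eq_zero]
  refine iInf_le_of_le (fun _ => Classical.arbitrary T) (iInf_le_of_le (fun _ => 0)
    (iInf_le_of_le (fun _ => hδ.le) (iInf_le_of_le (empty_subset _) ?_)))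
  simp

lemma exists_cover_of_codimH_lt {T : Type*} [MetricSpace T] [MeasurableSpace T] {μ : Measure T}
    {S : Set T} {M : ℝ≥0∞} (h : codimH μ S < M) {δ : ℝ} (hδ : 0 < δ) :
    ∃ (c : ℕ → T) (r : ℕ → ℝ), (∀ i, r i ≤ δ) ∧ S ⊆ ⋃ i, ball (c i) (r i) ∧
      ∑' i, μ (ball (c i) (r i)) / ENNReal.ofReal (r i) < M := by
  have h1 := (le_iSup₂ (f := fun (δ : ℝ) (_ : 0 < δ) =>
    ⨅ (c : ℕ → T) (r : ℕ → ℝ) (_ : ∀ i, r i ≤ δ) (_ : S ⊆ ⋃ i, ball (c i) (r i)),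
      ∑' i, μ (ball (c i) (r i)) / ENNReal.ofReal (r i)) δ hδ).trans_lt h
  simp only [iInf_lt_iff] at h1
  obtain ⟨c, r, hr, hc, hlt⟩ := h1
  exact ⟨c, r, hr, hc, hlt⟩

/-- Finitely many disjoint balls of a fixed radius, centered in `G`, whose centers form a
`2 * R`-net of `G`. -/
lemma exists_disjoint_balls {T : Type*} [MetricSpace T] [CompactSpace T] (G : Set T) {R : ℝ}
    (hR : 0 < R) :
    ∃ (m : ℕ) (z : Fin m → T), (∀ i, z i ∈ G) ∧
      (∀ i j, i ≠ j → Disjoint (ball (z i) R) (ball (z j) R)) ∧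
      ∀ g ∈ G, ∃ i, dist g (z i) < 2 * R := by
  obtain ⟨u, huG, hdisj, hcov⟩ := Vitali.exists_disjoint_subfamily_covering_enlargement
    (fun a : T => ball a R) G (fun _ => R) 2 (by norm_num) (fun _ _ => hR.le) R (fun _ _ => le_rfl)
    (fun a _ => ⟨a, mem_ball_self hR⟩)
  have hfin : u.Finite := by
    obtain ⟨t, -, htfin, ht⟩ := (isCompact_univ (X := T)).finite_cover_balls (half_pos hR)
    have hex : ∀ a : T, ∃ b ∈ t, dist a b < R / 2 := by
      intro a
      have := ht (mem_univ a)
      simpa using this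
    choose f hft hf using hex
    refine Set.Finite.of_injOn (f := f) (fun a _ => hft a) (fun a ha b hb hab => ?_) htfin
    by_contra hne
    have hd := Set.disjoint_left.1 (hdisj ha hb hne) (mem_ball_self hR)
    rw [mem_ball, not_lt] at hd
    have h1 := dist_triangle_right a b (f a)
    have h2 := hf a
    have h3 := hf b
    rw [← hab] at h3
    linarith
  set e := hfin.toFinset.equivFin with he
  refine ⟨_, fun i => (e.symm i : T), fun i => huG (hfin.mem_toFinset.1 (e.symm i).2),
    fun i j hij => ?_, fun g hg => ?_⟩
  · exact hdisj (hfin.mem_toFinset.1 (e.symm i).2) (hfin.mem_toFinset.1 (e.symm j).2)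
      fun h => hij (e.symm.injective (Subtype.ext h))
  · obtain ⟨b, hb, ⟨w, hwg, hwb⟩, -⟩ := hcov g hg
    refine ⟨e ⟨b, hfin.mem_toFinset.2 hb⟩, ?_⟩
    simp only [Equiv.symm_apply_apply]
    have := dist_triangle_left g b w
    rw [mem_ball] at hwg hwb
    linarith

section LevelSet

variable {T : Type*} [MetricSpace T] [CompactSpace T] [MeasurableSpace T] [BorelSpace T]
  {μ : Measure T} {D A : ℝ≥0} {p : ℕ}

/-- The lower density constant for level sets. -/
def levelConst (D A : ℝ≥0) (p : ℕ) : ℝ≥0 := (4 * (4 * A + 1) * D ^ (p + 4))⁻¹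

lemma PIData.small_side (h : PIData μ D A p) {φ : T → UnitAddCircle} (hφc : Continuous φ)
    {n : ℕ} (hn : 0 < n) (hφ : ∀ x y, dist x y < 1 / n → dist (φ x) (φ y) < 1 / 16) {x : T}
    (hx : ‖φ x‖ < 7 / 16)
    (hcod : codimH μ (φ ⁻¹' {0} ∩ ball x (1 / n)) < levelConst D A p * n * μ (ball x (1 / n))) :
    let ε : ℝ := 1 / (2 ^ (p + 1) * n)
    let P := {y | 0 ≤ angle (φ y)}
    μ (ball x ε \ P) ≤ ((4 * D ^ 2)⁻¹ : ℝ≥0) * μ (ball x ε) ∨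
      μ (ball x ε ∩ P) ≤ ((4 * D ^ 2)⁻¹ : ℝ≥0) * μ (ball x ε) := by
  intro ε P
  have hn' : (0 : ℝ) < n := by exact_mod_cast hn
  have hε : 0 < ε := by positivity
  have hεn : (2 : ℝ) ^ (p + 1) * ε = 1 / n := by
    simp only [ε]; field_simp
  have hP : MeasurableSet P :=
    measurableSet_le measurable_const (measurable_angle.comp hφc.measurable)
  obtain ⟨c, r, hr, hcover, hlt⟩ := exists_cover_of_codimH_lt hcod hε
  have hcross : ∀ γ : UPath T, γ.InSet (ball x (1 / n)) → (γ.start ∈ P ↔ γ.finish ∉ P) →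
      ∃ t ∈ Icc γ.a γ.b, γ.toFun t ∈ φ ⁻¹' {0} := by
    intro γ hγ hdiff
    have hcont : ContinuousOn (fun t => angle (φ (γ.toFun t))) (Icc γ.a γ.b) := by
      intro t ht
      have h1 : ‖φ (γ.toFun t)‖ < 1 / 2 := by
        have h2 := hφ _ _ (hγ t ht)
        rw [dist_eq_norm] at h2
        linarith [norm_sub_norm_le (φ (γ.toFun t)) (φ x)]
      have h3 : ContinuousWithinAt (fun t => φ (γ.toFun t)) (Icc γ.a γ.b) t :=
        hφc.comp_continuousOn γ.lip.continuousOn t ht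
      exact ContinuousAt.comp_continuousWithinAt (g := angle)
        (f := fun t => φ (γ.toFun t)) (continuousAt_angle h1) h3
    have ha : γ.a ∈ Icc γ.a γ.b := left_mem_Icc.2 γ.hab
    have hb : γ.b ∈ Icc γ.a γ.b := right_mem_Icc.2 γ.hab
    have hzero : (0 : ℝ) ∈ (fun t => angle (φ (γ.toFun t))) '' Icc γ.a γ.b := by
      by_cases hs : γ.start ∈ P
      · have hf : angle (φ (γ.toFun γ.b)) < 0 := not_le.1 (hdiff.1 hs)
        exact isPreconnected_Icc.intermediate_value hb ha hcont ⟨hf.le, hs⟩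
      · have hf : γ.finish ∈ P := by tauto
        have hs' : angle (φ (γ.toFun γ.a)) < 0 := not_le.1 hs
        exact isPreconnected_Icc.intermediate_value ha hb hcont ⟨hs'.le, hf⟩
    obtain ⟨t, ht, ht0⟩ := hzero
    exact ⟨t, ht, angle_eq_zero ht0⟩
  have hmain := h.measure_le_of_cover hP hε (s := 1 / n)
    (by rw [← hεn, pow_succ]; linarith) hcross hr hcover
  have hX : (4 * A + 1) * D * ENNReal.ofReal ε *
      ∑' i, μ (ball (c i) (r i)) / ENNReal.ofReal (r i) ≤
        ((4 * D ^ 2)⁻¹ : ℝ≥0) * μ (ball x ε) := by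
    have hD : 0 < D := zero_lt_one.trans_le h.one_le
    have h1 : ENNReal.ofReal ε * n ≤ 1 := by
      rw [← ENNReal.ofReal_natCast, ← ENNReal.ofReal_mul hε.le]
      refine ENNReal.ofReal_le_one.2 ?_
      have h2 : (1 : ℝ) ≤ 2 ^ (p + 1) := one_le_pow₀ (by norm_num)
      have h3 : (2 : ℝ) ^ (p + 1) * ε * n = 1 := by rw [hεn]; field_simp
      nlinarith [mul_pos hε hn']
    have h2 : μ (ball x (1 / n)) ≤ (D : ℝ≥0∞) ^ (p + 1) * μ (ball x ε) := by
      rw [← hεn]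
      exact measure_ball_two_pow_mul_le h.dbl _ _ _
    have h3 : (4 * A + 1) * D * levelConst D A p * D ^ (p + 1) = (4 * D ^ 2)⁻¹ := by
      rw [levelConst]
      field_simp
      ring
    calc (4 * A + 1) * D * ENNReal.ofReal ε *
          ∑' i, μ (ball (c i) (r i)) / ENNReal.ofReal (r i)
        ≤ (4 * A + 1) * D * ENNReal.ofReal ε *
          (levelConst D A p * n * ((D : ℝ≥0∞) ^ (p + 1) * μ (ball x ε))) := by
            gcongr
            exact hlt.le.trans (by gcongr)
      _ = (4 * A + 1) * D * levelConst D A p * (D : ℝ≥0∞) ^ (p + 1) *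
          (ENNReal.ofReal ε * n) * μ (ball x ε) := by ring
      _ ≤ (4 * A + 1) * D * levelConst D A p * (D : ℝ≥0∞) ^ (p + 1) * 1 * μ (ball x ε) := by
            gcongr
      _ = ((4 * D ^ 2)⁻¹ : ℝ≥0) * μ (ball x ε) := by
            rw [← h3, mul_one]; push_cast; rfl
  exact hmain.imp (fun h' => h'.trans hX) (fun h' => h'.trans hX)

lemma PIData.exists_balls_and_unfold [Nonempty T] (h : PIData μ D A p) {φ : T → UnitAddCircle}
    (hφc : Continuous φ) :
    ∃ N : ℕ, ∀ n : ℕ, N ≤ n → ∃ (m : ℕ) (z : Fin m → T),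
      (∀ i j : Fin m, i ≠ j →
        Disjoint (ball (z i) (1 / (n : ℝ))) (ball (z j) (1 / (n : ℝ)))) ∧
      (∀ i : Fin m, levelConst D A p * (n : ℝ≥0∞) * μ (ball (z i) (1 / (n : ℝ))) ≤
        codimH μ (φ ⁻¹' {0} ∩ ball (z i) (1 / (n : ℝ)))) ∧
      ∃ v : T → ℝ, Continuous v ∧
        (∃ L : ℝ≥0, LipschitzWith L fun x => φ x + (v x : UnitAddCircle)) ∧
        IsUpperGradient (fun x => φ x + (v x : UnitAddCircle)) fun x => (n : ℝ≥0∞) *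
          ∑ i : Fin m, (ball (z i) (5 / (n : ℝ))).indicator (fun _ => (1 : ℝ≥0∞)) x := by
  classical
  have hD : 0 < D := zero_lt_one.trans_le h.one_le
  have hCpos : 0 < levelConst D A p := by
    unfold levelConst
    positivity
  obtain ⟨η, hη, hunif⟩ := Metric.uniformContinuous_iff.1
    (CompactSpace.uniformContinuous_of_continuous hφc) (1 / 16) (by norm_num)
  obtain ⟨N, hN⟩ := exists_nat_one_div_lt hη
  refine ⟨N + 1, fun n hNn => ?_⟩
  have hn : 0 < n := by omega
  have hn' : (0 : ℝ) < n := by exact_mod_cast hn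
  have hφ : ∀ x y, dist x y < 1 / n → dist (φ x) (φ y) < 1 / 16 := fun x y hxy => by
    refine hunif (hxy.trans (lt_of_le_of_lt ?_ hN))
    apply one_div_le_one_div_of_le (by positivity)
    exact_mod_cast hNn
  have hnorm : ∀ x y, dist x y < 1 / n → ‖φ x‖ < ‖φ y‖ + 1 / 16 := by
    intro x y hxy
    have h1 := hφ x y hxy
    rw [dist_eq_norm] at h1
    linarith [norm_sub_norm_le (φ x) (φ y)]
  set G : Set T := {x | levelConst D A p * (n : ℝ≥0∞) * μ (ball x (1 / (n : ℝ))) ≤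
    codimH μ (φ ⁻¹' {0} ∩ ball x (1 / (n : ℝ)))} with hG
  set ε : ℝ := 1 / (2 ^ (p + 1) * n) with hε
  have hε0 : 0 < ε := by positivity
  have hεn : ε ≤ 1 / n := by
    apply one_div_le_one_div_of_le hn'
    have : (1 : ℝ) ≤ 2 ^ (p + 1) := one_le_pow₀ (by norm_num)
    nlinarith
  set P : Set T := {y | 0 ≤ angle (φ y)} with hP
  set Q : T → Prop := fun x => if 1 / 4 ≤ ‖φ x‖ then 0 ≤ angle (φ x) else
    μ (ball x ε \ P) ≤ ((4 * D ^ 2)⁻¹ : ℝ≥0) * μ (ball x ε) with hQ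
  have hGnorm : ∀ g ∈ G, ‖φ g‖ < 1 / 16 := by
    intro g hg
    have hne : (φ ⁻¹' {0} ∩ ball g (1 / (n : ℝ))).Nonempty := by
      by_contra hemp
      rw [not_nonempty_iff_eq_empty] at hemp
      have hg' : levelConst D A p * (n : ℝ≥0∞) * μ (ball g (1 / (n : ℝ))) ≤ 0 := by
        rw [← codimH_empty μ, ← hemp]
        exact hg
      have hpos := h.pos g (1 / n) (by positivity)
      have : 0 < levelConst D A p * (n : ℝ≥0∞) * μ (ball g (1 / (n : ℝ))) := by
        refine ENNReal.mul_pos (ENNReal.mul_pos ?_ ?_).ne' hpos.ne'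
        · exact_mod_cast hCpos.ne'
        · exact_mod_cast hn.ne'
      exact absurd hg' (not_le.2 this)
    obtain ⟨w, hw0, hwg⟩ := hne
    have hw0' : φ w = 0 := hw0
    have := hnorm g w (by rwa [dist_comm])
    rwa [hw0', norm_zero, zero_add] at this
  have hmaj : ∀ x, x ∉ G → ‖φ x‖ < 7 / 16 →
      (Q x → μ (ball x ε \ P) ≤ ((4 * D ^ 2)⁻¹ : ℝ≥0) * μ (ball x ε)) ∧
      (¬ Q x → μ (ball x ε ∩ P) ≤ ((4 * D ^ 2)⁻¹ : ℝ≥0) * μ (ball x ε)) := by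
    intro x hxG hx
    by_cases hx4 : 1 / 4 ≤ ‖φ x‖
    · have hsign : ∀ y ∈ ball x ε, (0 ≤ angle (φ x) ↔ 0 ≤ angle (φ y)) := fun y hy =>
        angle_nonneg_iff_of_dist_lt hx4 hx
          (hφ x y (by rw [dist_comm]; exact (mem_ball.1 hy).trans_le hεn))
      simp only [hQ, if_pos hx4]
      constructor
      · intro h0
        have : ball x ε \ P = ∅ := by
          ext y
          simp only [Set.mem_sdiff, mem_empty_iff_false, iff_false, not_and, not_not]
          exact fun hy => (hsign y hy).1 h0
        rw [this, measure_empty]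
        exact zero_le
      · intro h0
        have : ball x ε ∩ P = ∅ := by
          ext y
          simp only [mem_inter_iff, mem_empty_iff_false, iff_false, not_and]
          exact fun hy hyP => h0 ((hsign y hy).2 hyP)
        rw [this, measure_empty]
        exact zero_le
    · simp only [hQ, if_neg hx4]
      refine ⟨id, fun hnot => ?_⟩
      exact (h.small_side hφc hn hφ hx (not_le.1 hxG)).resolve_left hnot
  have hincomp : ∀ x y, dist x y < ε / 2 →
      μ (ball x ε \ P) ≤ ((4 * D ^ 2)⁻¹ : ℝ≥0) * μ (ball x ε) →
      μ (ball y ε ∩ P) ≤ ((4 * D ^ 2)⁻¹ : ℝ≥0) * μ (ball y ε) → False := by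
    intro x y hxy hx hy
    set b := μ (ball x (ε / 2)) with hb
    have hbpos : 0 < b := h.pos _ _ (by positivity)
    have hbfin : b < ⊤ := h.fin _ _
    have h1 : μ (ball x ε) ≤ D * b := by
      have := h.dbl x (ε / 2)
      rwa [mul_div_cancel₀ _ (two_ne_zero)] at this
    have h2 : μ (ball y ε) ≤ D ^ 2 * b := by
      calc μ (ball y ε) ≤ μ (ball x (2 ^ 2 * (ε / 2))) :=
            measure_mono (ball_subset_ball' (by rw [dist_comm]; linarith))
        _ ≤ _ := measure_ball_two_pow_mul_le h.dbl _ _ _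
    have h3 : ball x (ε / 2) ⊆ (ball x ε \ P) ∪ (ball y ε ∩ P) := by
      intro w hw
      by_cases hwP : w ∈ P
      · exact Or.inr ⟨ball_subset_ball' (by linarith) hw, hwP⟩
      · exact Or.inl ⟨ball_subset_ball (by linarith) hw, hwP⟩
    have h4 : (4 * D ^ 2)⁻¹ * (D + D ^ 2) ≤ 1 / 2 := by
      have h5 : D ≤ D ^ 2 := by
        rw [sq]
        exact le_mul_of_one_le_left zero_le h.one_le
      calc (4 * D ^ 2)⁻¹ * (D + D ^ 2) ≤ (4 * D ^ 2)⁻¹ * (D ^ 2 + D ^ 2) := by gcongr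
        _ = 1 / 2 := by field_simp; norm_num
    have h5 : b ≤ (1 / 2 : ℝ≥0) * b := by
      calc b ≤ μ (ball x ε \ P) + μ (ball y ε ∩ P) :=
            (measure_mono h3).trans (measure_union_le _ _)
        _ ≤ ((4 * D ^ 2)⁻¹ : ℝ≥0) * (D * b) + ((4 * D ^ 2)⁻¹ : ℝ≥0) * (D ^ 2 * b) :=
            add_le_add (hx.trans (by gcongr)) (hy.trans (by gcongr))
        _ = (((4 * D ^ 2)⁻¹ * (D + D ^ 2) : ℝ≥0) : ℝ≥0∞) * b := by
            push_cast; ring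
        _ ≤ _ := by gcongr
    have h6 : (1 / 2 : ℝ≥0) * b < 1 * b := by
      refine (ENNReal.mul_lt_mul_iff_left hbpos.ne' hbfin.ne).2 ?_
      exact_mod_cast (by norm_num : (1 / 2 : ℝ≥0) < 1)
    rw [one_mul] at h6
    exact absurd h5 (not_le.2 h6)
  have hsep : ∀ x y, x ∉ G → y ∉ G → dist x y < ε / 2 → ‖φ x‖ < 3 / 8 → (Q x ↔ Q y) := by
    intro x y hxG hyG hxy hx
    have hy : ‖φ y‖ < 7 / 16 := by
      have := hnorm y x (by rw [dist_comm]; linarith)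
      linarith
    obtain ⟨hx1, hx2⟩ := hmaj x hxG (by linarith)
    obtain ⟨hy1, hy2⟩ := hmaj y hyG hy
    constructor
    · intro hQx
      by_contra hQy
      exact hincomp x y hxy (hx1 hQx) (hy2 hQy)
    · intro hQy
      by_contra hQx
      exact hincomp y x (by rwa [dist_comm]) (hy1 hQy) (hx2 hQx)
  obtain ⟨v, hv, hlip, hug⟩ := exists_unfold hφc hn (half_pos hε0) (by linarith) hφ hGnorm
    (fun x hx => by simp only [hQ, if_pos hx]) hsep
  obtain ⟨m, z, hzG, hzdisj, hznet⟩ := exists_disjoint_balls G (one_div_pos.2 hn')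
  refine ⟨m, z, hzdisj, hzG, v, hv, hlip, hug.mono fun x => ?_⟩
  gcongr
  by_cases hx : x ∈ {x | ∃ g ∈ G, dist x g < 1 / (n : ℝ)}
  · obtain ⟨g, hg, hxg⟩ := hx
    obtain ⟨i, hi⟩ := hznet g hg
    have hxi : x ∈ ball (z i) (5 / (n : ℝ)) := by
      rw [mem_ball]
      have h1 := dist_triangle x g (z i)
      have h2 : (5 : ℝ) / n = 5 * (1 / n) := by ring
      have h3 : (0 : ℝ) < 1 / n := by positivity
      linarith
    calc _ ≤ (1 : ℝ≥0∞) := indicator_le_self _ (fun _ => (1 : ℝ≥0∞)) _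
      _ = (ball (z i) (5 / (n : ℝ))).indicator (fun _ => (1 : ℝ≥0∞)) x := by
        rw [indicator_of_mem hxi]
      _ ≤ _ := Finset.single_le_sum
        (f := fun i => (ball (z i) (5 / (n : ℝ))).indicator (fun _ => (1 : ℝ≥0∞)) x)
        (fun _ _ => zero_le) (Finset.mem_univ i)
  · rw [indicator_of_notMem hx]
    exact zero_le

end LevelSet

end Duality

open Duality in
/-- **Proposition 4.5.** From a continuous map of positive degree one obtains disjoint
balls on which the level set has large codimension 1 measure, together with a Lipschitz
map of degree 1 whose upper gradient is `n ∑ χ_{5Bᵢ}`. -/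
theorem statement11 (Cμ : ℝ≥0∞) (CP lP : ℝ) :
    ∃ C : ℝ≥0∞, 0 < C ∧ C < ⊤ ∧
      ∀ (T : Type) [MetricSpace T] [MeasurableSpace T] [BorelSpace T] [CompactSpace T]
        (μ : Measure T) (x₀ : T) (α₀ : Path x₀ x₀),
        Standing μ Cμ CP lP x₀ α₀ →
        ∀ (φ : T → UnitAddCircle) (k : ℤ), 0 < k → HasDegree x₀ α₀ φ k →
          ∃ N : ℕ, ∀ n : ℕ, N ≤ n →
            ∃ (m : ℕ) (z : Fin m → T),
              (∀ i j : Fin m, i ≠ j →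
                Disjoint (ball (z i) (1 / (n : ℝ))) (ball (z j) (1 / (n : ℝ)))) ∧
              (∀ i : Fin m,
                C * (n : ℝ≥0∞) * μ (ball (z i) (1 / (n : ℝ))) ≤
                  codimH μ (φ ⁻¹' {0} ∩ ball (z i) (1 / (n : ℝ)))) ∧
              ∃ ψ : T → UnitAddCircle, DegOneLip x₀ α₀ ψ ∧
                IsUpperGradient ψ fun x => (n : ℝ≥0∞) *
                  ∑ i : Fin m, (ball (z i) (5 / (n : ℝ))).indicator
                    (fun _ => (1 : ℝ≥0∞)) x := by
  obtain ⟨D, A, p, hD, hdata⟩ := exists_PIData Cμ CP lP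
  have hpos : 0 < levelConst D A p := by
    have : 0 < D := zero_lt_one.trans_le hD
    unfold levelConst
    positivity
  refine ⟨levelConst D A p, by exact_mod_cast hpos, ENNReal.coe_lt_top, ?_⟩
  intro T _ _ _ _ μ x₀ α₀ hT φ k hk hφ
  obtain ⟨hdoubling, hpoincare, -, hgen, f, hf⟩ := hT
  rcases subsingleton_or_nontrivial T with hsub | hnt
  · refine ⟨0, fun n _ => ⟨0, Fin.elim0, fun i => i.elim0, fun i => i.elim0, f, hf, ?_⟩⟩
    intro γ
    rw [Subsingleton.elim γ.start γ.finish, edist_self]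
    exact zero_le
  have h := hdata T μ hdoubling hpoincare
  have : Nonempty T := ⟨x₀⟩
  have : PathConnectedSpace T := h.pathConnectedSpace
  have : LocallyPathConnectedSpace T := h.locallyPathConnectedSpace
  obtain ⟨g, hg, hφg⟩ := exists_lift_of_hasDegree hgen hf.2 hφ
  have hk0 : (k : ℝ) ≠ 0 := by exact_mod_cast hk.ne'
  have hgk : Continuous fun x => g x / k := hg.div_const _
  have hw := hf.2.add_coe hgk
  have hlevel : (fun x => f x + ((g x / k : ℝ) : UnitAddCircle)) ⁻¹' {0} ⊆ φ ⁻¹' {0} := by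
    intro x hx
    have hx0 : f x + ((g x / k : ℝ) : UnitAddCircle) = 0 := hx
    have hkg : k • ((g x / k : ℝ) : UnitAddCircle) = (g x : UnitAddCircle) := by
      rw [← AddCircle.coe_zsmul, zsmul_eq_mul, mul_div_cancel₀ _ hk0]
    rw [mem_preimage, mem_singleton_iff, hφg, ← hkg, ← smul_add, hx0, smul_zero]
  obtain ⟨N, hN⟩ := h.exists_balls_and_unfold hw.fst
  refine ⟨N, fun n hn => ?_⟩
  obtain ⟨m, z, hdisj, hlarge, v, hv, hlip, hug⟩ := hN n hn
  exact ⟨m, z, hdisj,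
    fun i => (hlarge i).trans (codimH_mono μ (inter_subset_inter_left _ hlevel)),
    _, ⟨hlip, hw.add_coe hv⟩, hug⟩
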